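/- (Asymptotic normality under one-step PGD-Gauss.) Fix K ≥ 2 and an arm k, and consider a sequence of experiments indexed by n: covariate matrices X⁽ⁿ⁾ ∈ ℝ^{n×d_n} whose rows all have unit Euclidean norm, potential outcome vectors Y⁽ⁿ⁾(k) ∈ ℝⁿ, and step sizes η_n > 0 with η_n ‖X⁽ⁿ⁾X⁽ⁿ⁾ᵀ − I_n‖_op → 0. Let Σ_{η_n} be the one-step PGD-Gauss solution, let T⁽ⁿ⁾ ~ N(0, Σ_{η_n}), D_i = g(T_i), τ_k = (1/n)Σ_i Y_i(k), τ̂_k = (K/n)Σ_i 1{D_i=k}Y_i(k), and define Ỹ(k) = f_k(I_n)^{−1/2} f_k(Σ_{η_n})^{1/2} Y(k) (here f_k is applied entrywise and f_k(I_n) = ((K−1)/K²) I_n). Assume: (1) max_{1≤i≤n} Ỹ_i(k)²/n → 0; (2) n·Var(τ̂_k) = ((K−1)/n)‖Ỹ(k)‖² converges to a positive limit σ²; (3) there is M > 0 with ‖Y⁽ⁿ⁾(k)‖² ≤ nM for all n. Then √n (τ̂_k − τ_k) converges in distribution to N(0, σ²). -/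

import Mathlib

open MeasureTheory ProbabilityTheory Matrix Real Filter
open scoped BigOperators ENNReal NNReal Topology

noncomputable section

/-- The spectral (operator) norm of a square real matrix. -/
def opNorm {m : ℕ} (A : Matrix (Fin m) (Fin m) ℝ) : ℝ :=
  ‖(Matrix.toEuclideanCLM (𝕜 := ℝ) A : EuclideanSpace ℝ (Fin m) →L[ℝ] EuclideanSpace ℝ (Fin m))‖

/-- The standard normal CDF `Φ`. -/
def stdGaussianCDF (x : ℝ) : ℝ := (gaussianReal 0 1 (Set.Iic x)).toReal

/-- The set of values `t` mapped by the Gaussianization map `g` to arm `k`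
(arms are `0`-indexed: `k : Fin K` represents arm `k+1`; `q m = Φ⁻¹(m/K)`). -/
def armSet (q : ℕ → ℝ) (K : ℕ) (k : Fin K) : Set ℝ :=
  if k.val = 0 then Set.Iic (q 1)
  else if k.val = K - 1 then Set.Ioi (q (K - 1))
  else Set.Ioc (q k.val) (q (k.val + 1))

/-- The function `r_{i,j}(ρ)`. -/
def rfun (q : ℕ → ℝ) (i j : ℕ) (ρ : ℝ) : ℝ :=
  ∫ r in (0 : ℝ)..ρ,
    (2 * π * Real.sqrt (1 - r ^ 2))⁻¹ *
      Real.exp (-((q i ^ 2 + q j ^ 2 - 2 * r * q i * q j) / (2 * (1 - r ^ 2))))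

/-- The function `f_k` (arms `0`-indexed: `k : Fin K` represents arm `k+1`). -/
def fkfun (q : ℕ → ℝ) (K : ℕ) (k : Fin K) (ρ : ℝ) : ℝ :=
  if k.val = 0 then rfun q 1 1 ρ
  else if k.val = K - 1 then rfun q (K - 1) (K - 1) ρ
  else rfun q k.val k.val ρ + rfun q (k.val + 1) (k.val + 1) ρ
    - 2 * rfun q k.val (k.val + 1) ρ

/-- The one-step PGD-Gauss solution `Σ_η = D⁻¹ U² D⁻¹`, where
`U = I − η c (XXᵀ − I)` with `c = f_k′(0)` and `D` is the diagonal matrix whose `i`-th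
diagonal entry is the Euclidean norm of the `i`-th row of `U`. -/
def pgd {n d : ℕ} (X : Matrix (Fin n) (Fin d) ℝ) (η c : ℝ) : Matrix (Fin n) (Fin n) ℝ :=
  let U : Matrix (Fin n) (Fin n) ℝ := 1 - (η * c) • (X * Xᵀ - 1)
  Matrix.of fun i j =>
    (U * U) i j / (Real.sqrt (∑ l, U i l ^ 2) * Real.sqrt (∑ l, U j l ^ 2))

abbrev gam : Measure ℝ := gaussianReal 0 1
abbrev gamN (n : ℕ) : Measure (Fin n → ℝ) := Measure.pi fun _ : Fin n => gaussianReal 0 1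

lemma charFunDual_gam (L : StrongDual ℝ ℝ) :
    charFunDual gam L = Complex.exp (-((L 1 : ℝ) ^ 2 / 2 : ℝ)) := by
  have := charFun_gaussianReal (μ := 0) (v := 1) (L 1)
  rw [charFun_apply_real] at this
  rw [charFunDual_apply]
  have h : ∀ v : ℝ, L v = L 1 * v := fun v => by
    have := L.map_smul v 1
    simp at this
    rw [this]; ring
  have h2 : (fun v : ℝ => Complex.exp ((L v : ℝ) * Complex.I)) =
      fun v : ℝ => Complex.exp ((L 1 : ℝ) * v * Complex.I) := by
    funext v; rw [h v]; push_cast; rfl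
  rw [h2, this]
  congr 1
  simp

lemma charFunDual_map_mulVec {m n : ℕ} (M : Matrix (Fin m) (Fin n) ℝ)
    (L : StrongDual ℝ (Fin m → ℝ)) :
    charFunDual (Measure.map (fun z => M *ᵥ z) (gamN n)) L =
      Complex.exp (-(((fun i => L (Pi.single i 1)) ⬝ᵥ
        ((M * Mᵀ) *ᵥ (fun i => L (Pi.single i 1)))) / 2 : ℝ)) := by
  set l : Fin m → ℝ := fun i => L (Pi.single i 1) with hl
  have hL : ∀ x, L x = l ⬝ᵥ x := by
    intro x
    conv_lhs => rw [pi_eq_sum_univ' x]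
    rw [map_sum]
    simp only [map_smul, dotProduct, smul_eq_mul]
    refine Finset.sum_congr rfl fun i _ => ?_
    rw [mul_comm]
  let ML : (Fin n → ℝ) →L[ℝ] (Fin m → ℝ) := LinearMap.toContinuousLinearMap M.mulVecLin
  have h1 : (fun z => M *ᵥ z) = ML := by ext z; simp [ML]
  rw [h1, charFunDual_map, charFunDual_pi]
  simp_rw [charFunDual_gam]
  rw [← Complex.exp_sum]
  congr 1
  rw [Finset.sum_neg_distrib, ← Complex.ofReal_sum, ← Finset.sum_div]
  congr 3
  rw [← Matrix.mulVec_mulVec, Matrix.dotProduct_mulVec, ← Matrix.mulVec_transpose]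
  rw [dotProduct]
  refine Finset.sum_congr rfl fun i _ => ?_
  simp only [ContinuousLinearMap.comp_apply]
  rw [hL]
  simp only [ContinuousLinearMap.single_apply, ML, LinearMap.coe_toContinuousLinearMap', mulVecLin_apply]
  rw [Matrix.dotProduct_mulVec, ← Matrix.mulVec_transpose]
  simp [sq]

lemma map_mulVec_eq {m n p : ℕ} (M : Matrix (Fin m) (Fin n) ℝ) (N : Matrix (Fin m) (Fin p) ℝ)
    (h : M * Mᵀ = N * Nᵀ) :
    Measure.map (fun z => M *ᵥ z) (gamN n) = Measure.map (fun z => N *ᵥ z) (gamN p) := by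
  have hM : Measurable (fun z => M *ᵥ z) := by fun_prop
  have hN : Measurable (fun z => N *ᵥ z) := by fun_prop
  have := Measure.isProbabilityMeasure_map (μ := gamN n) hM.aemeasurable
  have := Measure.isProbabilityMeasure_map (μ := gamN p) hN.aemeasurable
  apply Measure.ext_of_charFunDual
  ext L
  rw [charFunDual_map_mulVec, charFunDual_map_mulVec, h]

def phi (x : ℝ) : ℝ := (√(2 * π))⁻¹ * Real.exp (-(1/2) * x ^ 2)

lemma phi_eq : phi = gaussianPDFReal 0 1 := by
  ext x
  simp [phi, gaussianPDFReal]
  left; ring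

lemma phi_nonneg (x : ℝ) : 0 ≤ phi x := by unfold phi; positivity
lemma phi_cont : Continuous phi := by unfold phi; fun_prop
lemma phi_le_one (x : ℝ) : phi x ≤ 1 := by
  unfold phi
  have h1 : (√(2 * π))⁻¹ ≤ 1 := by
    apply inv_le_one_of_one_le₀
    rw [Real.one_le_sqrt]
    nlinarith [Real.pi_gt_three]
  have h2 : Real.exp (-(1/2) * x ^ 2) ≤ 1 := by
    rw [Real.exp_le_one_iff]; nlinarith [sq_nonneg x]
  calc _ ≤ (1:ℝ) * 1 := by gcongr
    _ = 1 := by norm_num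
lemma phi_int : Integrable phi := by
  rw [phi_eq]; exact integrable_gaussianPDFReal 0 1
lemma phi_int' : Integrable (fun x => x * phi x) := by
  have := (integrable_mul_exp_neg_mul_sq (b := 1/2) (by norm_num)).const_mul (√(2 * π))⁻¹
  refine this.congr (ae_of_all _ fun x => ?_)
  simp only [phi]; ring
lemma phi_tendsto_atBot : Tendsto phi atBot (𝓝 0) := by
  have h : Tendsto (fun x : ℝ => -(1/2) * x ^ 2) atBot atBot := by
    apply Tendsto.const_mul_atTop_of_neg (by norm_num)
    have := (tendsto_pow_atTop (α := ℝ) (n := 2) (by norm_num)).comp tendsto_abs_atBot_atTop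
    refine this.congr fun x => ?_
    simp
  have := (Real.tendsto_exp_atBot.comp h).const_mul (√(2 * π))⁻¹
  rw [mul_zero] at this
  exact this

lemma gam_lint : gam = volume.withDensity (fun x => ENNReal.ofReal (phi x)) := by
  rw [gam, gaussianReal_of_var_ne_zero 0 (by norm_num)]
  congr 1
  ext x; rw [phi_eq]; rfl

lemma integral_gam (f : ℝ → ℝ) : ∫ x, f x ∂gam = ∫ x, phi x * f x := by
  rw [gam, integral_gaussianReal_eq_integral_smul (by norm_num), phi_eq]; rfl

lemma cdf_eq_integral (a : ℝ) : stdGaussianCDF a = ∫ x in Set.Iic a, phi x := by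
  have h : stdGaussianCDF a = gam.real (Set.Iic a) := rfl
  rw [h, ← integral_indicator_one measurableSet_Iic, integral_gam,
    ← integral_indicator measurableSet_Iic]
  congr 1; ext x
  by_cases hx : x ∈ Set.Iic a <;> simp [hx]

lemma cdf_eq_cdf : stdGaussianCDF = cdf gam := by
  ext a; rw [cdf_eq_real]; rfl

lemma cdf_hasDerivAt (a : ℝ) : HasDerivAt stdGaussianCDF (phi a) a := by
  have h : stdGaussianCDF = fun x => stdGaussianCDF 0 + ∫ t in (0:ℝ)..x, phi t := by
    ext x
    rw [cdf_eq_integral, cdf_eq_integral, ← intervalIntegral.integral_Iic_sub_Iic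
      phi_int.integrableOn phi_int.integrableOn]
    ring
  rw [h]
  exact (intervalIntegral.integral_hasDerivAt_right (phi_cont.intervalIntegrable _ _)
    (phi_cont.stronglyMeasurableAtFilter _ _) phi_cont.continuousAt).const_add _

lemma cdf_cont : Continuous stdGaussianCDF :=
  continuous_iff_continuousAt.2 fun a => (cdf_hasDerivAt a).continuousAt

lemma cdf_nonneg' (a : ℝ) : 0 ≤ stdGaussianCDF a := by rw [cdf_eq_cdf]; exact cdf_nonneg _ _
lemma cdf_le_one' (a : ℝ) : stdGaussianCDF a ≤ 1 := by rw [cdf_eq_cdf]; exact cdf_le_one _ _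

def pker (a b r : ℝ) : ℝ := (2 * π * Real.sqrt (1 - r ^ 2))⁻¹ *
      Real.exp (-((a ^ 2 + b ^ 2 - 2 * r * a * b) / (2 * (1 - r ^ 2))))

def Rf (a b ρ : ℝ) : ℝ := ∫ r in (0 : ℝ)..ρ, pker a b r

lemma rfun_eq (q : ℕ → ℝ) (i j : ℕ) : rfun q i j = Rf (q i) (q j) := rfl

lemma Rf_symm (a b : ℝ) : Rf a b = Rf b a := by
  ext ρ
  unfold Rf pker
  congr 1; ext r; congr 3; ring

def Gf (a b ρ : ℝ) : ℝ := ∫ x in Set.Iic a, phi x * stdGaussianCDF ((b - ρ * x) / √(1 - ρ ^ 2))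

lemma phi_phi (b ρ x : ℝ) (h : 0 < 1 - ρ ^ 2) :
    phi x * phi ((b - ρ * x) / √(1 - ρ ^ 2)) * (√(1 - ρ ^ 2))⁻¹ = pker x b ρ := by
  unfold phi pker
  have e : Real.exp (-((x ^ 2 + b ^ 2 - 2 * ρ * x * b) / (2 * (1 - ρ ^ 2)))) =
    Real.exp (-(1/2) * x ^ 2) * Real.exp (-(1/2) * ((b - ρ * x) / √(1 - ρ ^ 2)) ^ 2) := by
    rw [← Real.exp_add]; congr 1
    rw [div_pow, Real.sq_sqrt h.le]
    field_simp
    ring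
  rw [e]
  have : (√(2 * π))⁻¹ * (√(2 * π))⁻¹ = (2 * π)⁻¹ := by
    rw [← mul_inv, Real.mul_self_sqrt (by positivity)]
  rw [mul_inv, ← this]
  ring

lemma pker_hasDerivAt (b ρ x : ℝ) (h : 0 < 1 - ρ ^ 2) :
    HasDerivAt (fun x => pker x b ρ) (pker x b ρ * ((ρ * b - x) / (1 - ρ ^ 2))) x := by
  unfold pker
  have h1 : HasDerivAt (fun x => -((x ^ 2 + b ^ 2 - 2 * ρ * x * b) / (2 * (1 - ρ ^ 2))))
      ((ρ * b - x) / (1 - ρ ^ 2)) x := by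
    have h2 : HasDerivAt (fun x : ℝ => x ^ 2 + b ^ 2 - 2 * ρ * x * b) (2 * x - 2 * ρ * b) x := by
      have := (((hasDerivAt_id x).pow 2).add_const (b ^ 2)).sub
        (((hasDerivAt_id x).const_mul (2 * ρ)).mul_const b)
      refine this.congr_deriv ?_
      simp
    refine (h2.div_const (2 * (1 - ρ ^ 2))).neg.congr_deriv ?_
    field_simp; ring
  refine ((h1.exp).const_mul ((2 * π * Real.sqrt (1 - ρ ^ 2))⁻¹)).congr_deriv ?_
  ring

lemma arg_hasDerivAt (b x ρ : ℝ) (h : 0 < 1 - ρ ^ 2) :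
    HasDerivAt (fun ρ => (b - ρ * x) / √(1 - ρ ^ 2))
      ((ρ * b - x) / (1 - ρ ^ 2) * (√(1 - ρ ^ 2))⁻¹) ρ := by
  have h1 : HasDerivAt (fun ρ : ℝ => 1 - ρ ^ 2) (-(2 * ρ)) ρ := by
    simpa using ((hasDerivAt_id ρ).pow 2).const_sub 1
  have h2 : HasDerivAt (fun ρ : ℝ => b - ρ * x) (-x) ρ := by
    simpa using ((hasDerivAt_id ρ).mul_const x).const_sub b
  have h3 := h2.div (h1.sqrt h.ne') (Real.sqrt_ne_zero'.2 h)
  refine h3.congr_deriv ?_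
  have hs : √(1 - ρ ^ 2) ≠ 0 := Real.sqrt_ne_zero'.2 h
  rw [Real.sq_sqrt h.le]
  field_simp
  rw [Real.sq_sqrt h.le]
  ring

lemma Gf_integrand_int (a b ρ : ℝ) : Integrable (fun x => phi x * stdGaussianCDF ((b - ρ * x) / √(1 - ρ ^ 2))) (volume.restrict (Set.Iic a)) := by
  refine (phi_int.integrableOn (s := Set.Iic a)).mono' ?_ (ae_of_all _ fun x => ?_)
  · exact ((phi_cont.mul (cdf_cont.comp (by fun_prop)))).aestronglyMeasurable
  · rw [Real.norm_eq_abs, abs_of_nonneg (mul_nonneg (phi_nonneg _) (cdf_nonneg' _))]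
    exact mul_le_of_le_one_right (phi_nonneg _) (cdf_le_one' _)

lemma pker_tendsto (b ρ : ℝ) (h : 0 < 1 - ρ ^ 2) : Tendsto (fun x => pker x b ρ) atBot (𝓝 0) := by
  have h1 := phi_tendsto_atBot.mul_const (√(1 - ρ ^ 2))⁻¹
  rw [zero_mul] at h1
  refine tendsto_of_tendsto_of_tendsto_of_le_of_le tendsto_const_nhds h1 (fun x => ?_) (fun x => ?_)
  · unfold pker; positivity
  · show pker x b ρ ≤ _
    rw [← phi_phi _ _ _ h]
    gcongr
    exact mul_le_of_le_one_right (phi_nonneg _) (phi_le_one _)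

lemma Gf_hasDerivAt (a b ρ : ℝ) (h : 0 < 1 - ρ ^ 2) :
    HasDerivAt (Gf a b) (pker a b ρ) ρ := by
  set δ := (1 - ρ ^ 2) / 2 with hδ
  have hδ0 : 0 < δ := by positivity
  let F' : ℝ → ℝ → ℝ := fun r x =>
    phi x * (phi ((b - r * x) / √(1 - r ^ 2)) * ((r * b - x) / (1 - r ^ 2) * (√(1 - r ^ 2))⁻¹))
  have hs : {r : ℝ | δ < 1 - r ^ 2} ∈ 𝓝 ρ :=
    (isOpen_lt continuous_const (by fun_prop)).mem_nhds (by simp only [Set.mem_setOf_eq, hδ]; linarith)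
  have key := hasDerivAt_integral_of_dominated_loc_of_deriv_le
    (μ := volume.restrict (Set.Iic a))
    (F := fun r x => phi x * stdGaussianCDF ((b - r * x) / √(1 - r ^ 2)))
    (F' := F') (bound := fun x => (|b| * phi x + |x * phi x|) * (δ * √δ)⁻¹)
    (x₀ := ρ) hs
    (Eventually.of_forall fun r => (Gf_integrand_int a b r).aestronglyMeasurable)
    (Gf_integrand_int a b ρ)
    ((show Continuous (F' ρ) from by
      have := phi_cont
      show Continuous fun x => phi x * (phi ((b - ρ * x) / √(1 - ρ ^ 2)) * ((ρ * b - x) / (1 - ρ ^ 2) * (√(1 - ρ ^ 2))⁻¹))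
      exact phi_cont.mul ((phi_cont.comp (by fun_prop)).mul (by fun_prop))).aestronglyMeasurable)
    (ae_of_all _ fun x r hr => by
      have hr : δ < 1 - r ^ 2 := hr
      have hr0 : 0 < 1 - r ^ 2 := hδ0.trans hr
      have hr1 : |r| ≤ 1 := by
        rw [abs_le]; constructor <;> nlinarith
      simp only [F', Real.norm_eq_abs, abs_mul, abs_div, abs_inv, abs_of_nonneg (phi_nonneg _),
        abs_of_pos hr0, abs_of_nonneg (Real.sqrt_nonneg _)]
      have e1 : |r * b - x| ≤ |b| + |x| := by
        calc _ ≤ |r * b| + |x| := abs_sub _ _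
          _ ≤ _ := by
            rw [abs_mul]
            nlinarith [abs_nonneg b]
      have e2 : |r * b - x| / (1 - r ^ 2) * (√(1 - r ^ 2))⁻¹ ≤ (|b| + |x|) * (δ * √δ)⁻¹ := by
        rw [div_eq_mul_inv, mul_assoc, ← mul_inv]
        gcongr
      calc _ ≤ phi x * (1 * ((|b| + |x|) * (δ * √δ)⁻¹)) := by
            gcongr
            · exact phi_nonneg x
            · exact phi_le_one _
        _ = _ := by ring)
    ((((phi_int.const_mul |b|).add phi_int'.abs).mul_const _).integrableOn)
    (ae_of_all _ fun x r hr => by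
      have hr : δ < 1 - r ^ 2 := hr
      have hr0 : 0 < 1 - r ^ 2 := hδ0.trans hr
      exact ((cdf_hasDerivAt _).comp r (arg_hasDerivAt b x r hr0)).const_mul (phi x))
  have e : F' ρ = fun x => pker x b ρ * ((ρ * b - x) / (1 - ρ ^ 2)) := by
    ext x
    rw [← phi_phi _ _ _ h]; simp only [F']; ring
  refine key.2.congr_deriv ?_
  have := integral_Iic_of_hasDerivAt_of_tendsto' (a := a) (f := fun x => pker x b ρ)
    (f' := fun x => pker x b ρ * ((ρ * b - x) / (1 - ρ ^ 2)))
    (fun x _ => pker_hasDerivAt b ρ x h) (e ▸ key.1) (pker_tendsto b ρ h)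
  rw [e, this, sub_zero]

lemma pker_contAt (a b r : ℝ) (h : 0 < 1 - r ^ 2) : ContinuousAt (pker a b) r := by
  unfold pker
  have : √(1 - r ^ 2) ≠ 0 := Real.sqrt_ne_zero'.2 h
  have h2 : 2 * (1 - r ^ 2) ≠ 0 := by positivity
  have h3 : 2 * π * √(1 - r ^ 2) ≠ 0 := by positivity
  fun_prop (disch := assumption)

lemma pker_bound (a b r : ℝ) (h : r ∈ Set.Icc (-1:ℝ) 1) : ‖pker a b r‖ ≤ (√(1 - r ^ 2))⁻¹ := by
  have h0 : 0 ≤ 1 - r ^ 2 := by nlinarith [h.1, h.2]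
  unfold pker
  rw [Real.norm_eq_abs, abs_of_nonneg (by positivity)]
  have h1 : Real.exp (-((a ^ 2 + b ^ 2 - 2 * r * a * b) / (2 * (1 - r ^ 2)))) ≤ 1 := by
    rw [Real.exp_le_one_iff, neg_nonpos]
    apply div_nonneg _ (by positivity)
    nlinarith [sq_nonneg (a - r * b), mul_nonneg h0 (sq_nonneg b)]
  have h2 : (2 * π)⁻¹ ≤ 1 := inv_le_one_of_one_le₀ (by nlinarith [Real.pi_gt_three])
  rw [mul_inv]
  calc _ ≤ 1 * (√(1 - r ^ 2))⁻¹ * 1 := by gcongr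
    _ = _ := by ring

lemma pker_ii (a b : ℝ) : IntervalIntegrable (pker a b) volume (-1) 1 := by
  have h0 : IntervalIntegrable (fun x : ℝ ↦ (√(1 - x ^ 2))⁻¹) volume (-1) 1 := by
    have := Polynomial.Chebyshev.intervalIntegrable_sqrt_one_sub_sq_inv
    simpa using this
  refine h0.mono_fun' ?_ ?_
  · apply Measurable.aestronglyMeasurable
    unfold pker
    fun_prop
  · rw [Set.uIoc_of_le (by norm_num)]
    filter_upwards [ae_restrict_mem measurableSet_Ioc] with r hr
    exact pker_bound a b r ⟨hr.1.le, hr.2⟩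

lemma pker_ii' (a b x y : ℝ) (hx : x ∈ Set.Icc (-1:ℝ) 1) (hy : y ∈ Set.Icc (-1:ℝ) 1) :
    IntervalIntegrable (pker a b) volume x y :=
  (pker_ii a b).mono_set (by
    rw [Set.uIcc_of_le (by norm_num : (-1:ℝ) ≤ 1)]
    exact Set.uIcc_subset_Icc hx hy)

lemma Rf_contOn (a b : ℝ) : ContinuousOn (Rf a b) (Set.Icc (-1) 1) := by
  have := intervalIntegral.continuousOn_primitive_interval' (μ := volume) (f := pker a b) (a := 0) (b₁ := -1) (b₂ := 1)
    (pker_ii a b) (by rw [Set.uIcc_of_le (by norm_num)]; norm_num)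
  rwa [Set.uIcc_of_le (by norm_num)] at this

lemma Rf_zero (a b : ℝ) : Rf a b 0 = 0 := by simp [Rf]

lemma Gf_zero (a b : ℝ) : Gf a b 0 = stdGaussianCDF a * stdGaussianCDF b := by
  simp only [Gf, zero_mul, sub_zero]
  norm_num
  rw [integral_mul_const, ← cdf_eq_integral]

lemma sq_pos_of_mem {r : ℝ} (h : r ∈ Set.Ioo (-1:ℝ) 1) : 0 < 1 - r ^ 2 := by
  nlinarith [h.1, h.2]

lemma Gf_eq (a b ρ : ℝ) (h : ρ ∈ Set.Ioo (-1:ℝ) 1) :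
    Gf a b ρ = stdGaussianCDF a * stdGaussianCDF b + Rf a b ρ := by
  have hsub : Set.uIcc 0 ρ ⊆ Set.Ioo (-1:ℝ) 1 := by
    intro r hr
    rw [Set.mem_uIcc] at hr
    rcases hr with hr | hr <;> constructor <;> linarith [h.1, h.2, hr.1, hr.2]
  have := intervalIntegral.integral_eq_sub_of_hasDerivAt (a := 0) (b := ρ) (f := Gf a b) (f' := pker a b)
    (fun r hr => Gf_hasDerivAt a b r (sq_pos_of_mem (hsub hr)))
    (pker_ii' a b 0 ρ (by norm_num) ⟨h.1.le, h.2.le⟩)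
  rw [Gf_zero] at this
  unfold Rf
  linarith

lemma Gf_tendsto (a b : ℝ) :
    Tendsto (Gf a b) (𝓝[<] 1) (𝓝 (stdGaussianCDF (min a b))) := by
  have hlim : stdGaussianCDF (min a b) =
      ∫ x in Set.Iic a, phi x * (if x ≤ b then 1 else 0) := by
    rw [cdf_eq_integral, ← integral_indicator measurableSet_Iic, ← integral_indicator measurableSet_Iic]
    congr 1; ext x
    by_cases h1 : x ≤ a <;> by_cases h2 : x ≤ b <;> simp [h1, h2]
  rw [hlim]
  have hs : Tendsto (fun ρ : ℝ => √(1 - ρ ^ 2)) (𝓝[<] 1) (𝓝[>] 0) := by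
    rw [tendsto_nhdsWithin_iff]
    constructor
    · have : ContinuousAt (fun ρ : ℝ => √(1 - ρ ^ 2)) 1 := by fun_prop
      have h2 := this.tendsto.mono_left (nhdsWithin_le_nhds (s := Set.Iio 1))
      simpa using h2
    · have : Set.Ioo (-1:ℝ) 1 ∈ 𝓝[<] (1:ℝ) := Ioo_mem_nhdsLT (by norm_num)
      filter_upwards [this] with r hr
      exact Real.sqrt_pos.2 (sq_pos_of_mem hr)
  have hnum : ∀ x : ℝ, Tendsto (fun ρ : ℝ => b - ρ * x) (𝓝[<] 1) (𝓝 (b - x)) := by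
    intro x
    have : ContinuousAt (fun ρ : ℝ => b - ρ * x) 1 := by fun_prop
    have h2 := this.tendsto.mono_left (nhdsWithin_le_nhds (s := Set.Iio 1))
    simpa using h2
  refine tendsto_integral_filter_of_dominated_convergence phi ?_ ?_ phi_int.integrableOn ?_
  · exact Eventually.of_forall fun ρ => (Gf_integrand_int a b ρ).aestronglyMeasurable
  · refine Eventually.of_forall fun ρ => ae_of_all _ fun x => ?_
    rw [Real.norm_eq_abs, abs_of_nonneg (mul_nonneg (phi_nonneg _) (cdf_nonneg' _))]
    exact mul_le_of_le_one_right (phi_nonneg _) (cdf_le_one' _)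
  · have hb : ∀ᵐ x ∂(volume.restrict (Set.Iic a)), x ≠ b :=
      ae_restrict_of_ae (by simp [ae_iff])
    filter_upwards [hb] with x hx
    apply Tendsto.const_mul
    rw [cdf_eq_cdf]
    rcases lt_or_gt_of_ne hx with hx | hx
    · rw [if_pos hx.le]
      refine (tendsto_cdf_atTop gam).comp ?_
      exact (hnum x).pos_mul_atTop (by linarith) (tendsto_inv_nhdsGT_zero.comp hs)
    · rw [if_neg (by linarith)]
      refine (tendsto_cdf_atBot gam).comp ?_
      exact (hnum x).neg_mul_atTop (by linarith) (tendsto_inv_nhdsGT_zero.comp hs)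

lemma Rf_one (a b : ℝ) :
    stdGaussianCDF (min a b) = stdGaussianCDF a * stdGaussianCDF b + Rf a b 1 := by
  have hI : Set.Ioo (-1:ℝ) 1 ∈ 𝓝[<] (1:ℝ) := Ioo_mem_nhdsLT (by norm_num)
  have h1 : Tendsto (Rf a b) (𝓝[<] 1) (𝓝 (Rf a b 1)) := by
    have := (Rf_contOn a b) 1 (by norm_num)
    refine this.tendsto.mono_left ?_
    rw [nhdsWithin_le_iff]
    exact mem_of_superset hI Set.Ioo_subset_Icc_self
  refine tendsto_nhds_unique (Gf_tendsto a b) ?_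
  refine (h1.const_add (stdGaussianCDF a * stdGaussianCDF b)).congr' ?_
  filter_upwards [hI] with r hr
  rw [Gf_eq a b r hr]

lemma integral_single {n : ℕ} (u : Fin n → ℝ) (hu : u ⬝ᵥ u = 1) (h : ℝ → ℝ) (hm : Measurable h) :
    ∫ z, h (u ⬝ᵥ z) ∂(gamN n) = ∫ x, h x ∂gam := by
  have key := map_mulVec_eq (Matrix.of ![u]) (1 : Matrix (Fin 1) (Fin 1) ℝ) (by
    ext i j; fin_cases i; fin_cases j; simpa [Matrix.mul_apply, dotProduct] using hu)
  have e1 : ∫ z, h (u ⬝ᵥ z) ∂(gamN n) =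
      ∫ w, h (w 0) ∂(Measure.map (fun z => (Matrix.of ![u]) *ᵥ z) (gamN n)) := by
    rw [integral_map (by fun_prop) (by
      exact (hm.comp (measurable_pi_apply 0)).aestronglyMeasurable)]
    simp [Matrix.mulVec]
  rw [e1, key, integral_map (by fun_prop) (by
      exact (hm.comp (measurable_pi_apply 0)).aestronglyMeasurable)]
  simp only [Matrix.one_mulVec]
  have mp := measurePreserving_eval (fun _ : Fin 1 => gaussianReal 0 1) 0
  have := integral_map (μ := gamN 1) (φ := Function.eval (0 : Fin 1)) (f := h) (measurable_pi_apply 0).aemeasurable hm.aestronglyMeasurable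
  rw [mp.map_eq] at this
  exact this.symm

lemma integral_double {n : ℕ} (u v : Fin n → ℝ) (hu : u ⬝ᵥ u = 1) (hv : v ⬝ᵥ v = 1)
    (hr : 0 ≤ 1 - (u ⬝ᵥ v) ^ 2) (F : ℝ → ℝ → ℝ) (hm : Measurable (Function.uncurry F)) :
    ∫ z, F (u ⬝ᵥ z) (v ⬝ᵥ z) ∂(gamN n) =
      ∫ p, F p.1 ((u ⬝ᵥ v) * p.1 + √(1 - (u ⬝ᵥ v) ^ 2) * p.2) ∂(gam.prod gam) := by
  set ρ := u ⬝ᵥ v with hρ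
  set s := √(1 - ρ ^ 2) with hs
  have hss : s * s = 1 - ρ ^ 2 := Real.mul_self_sqrt hr
  have key := map_mulVec_eq (Matrix.of ![u, v]) (!![1, 0; ρ, s]) (by
    have hρ' : v ⬝ᵥ u = ρ := by rw [dotProduct_comm]
    ext i j
    have : ((Matrix.of ![u, v]) * (Matrix.of ![u, v])ᵀ) i j = (![u, v] i) ⬝ᵥ (![u, v] j) := by
      simp [Matrix.mul_apply, dotProduct]
    rw [this]
    fin_cases i <;> fin_cases j <;> simp [hu, hv, hρ', Matrix.mul_apply, Fin.sum_univ_two, ← hρ]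
    rw [hss]; ring)
  have hmm : Measurable fun w : Fin 2 → ℝ => F (w 0) (w 1) :=
    hm.comp (Measurable.prodMk (f := fun w : Fin 2 → ℝ => w 0) (g := fun w : Fin 2 → ℝ => w 1)
      (measurable_pi_apply 0) (measurable_pi_apply 1))
  have e1 : ∫ z, F (u ⬝ᵥ z) (v ⬝ᵥ z) ∂(gamN n) =
      ∫ w, F (w 0) (w 1) ∂(Measure.map (fun z => (Matrix.of ![u, v]) *ᵥ z) (gamN n)) := by
    rw [integral_map (by fun_prop) hmm.aestronglyMeasurable]
    simp [Matrix.mulVec]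
  rw [e1, key, integral_map (by fun_prop) hmm.aestronglyMeasurable]
  have mp := measurePreserving_finTwoArrow (gaussianReal 0 1)
  rw [← mp.map_eq, integral_map (by fun_prop) (by
    apply Measurable.aestronglyMeasurable
    exact hm.comp (Measurable.prodMk (f := fun p : ℝ × ℝ => p.1)
      (g := fun p : ℝ × ℝ => ρ * p.1 + s * p.2) (by fun_prop) (by fun_prop)))]
  congr 1; ext w
  simp [Matrix.mulVec, dotProduct, Fin.sum_univ_two, MeasurableEquiv.finTwoArrow]

def gI (a x : ℝ) : ℝ := if x ≤ a then 1 else 0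
def gC (a x : ℝ) : ℝ := gI a x - stdGaussianCDF a

lemma gI_meas (a : ℝ) : Measurable (gI a) :=
  Measurable.ite measurableSet_Iic measurable_const measurable_const
lemma gC_meas (a : ℝ) : Measurable (gC a) := (gI_meas a).sub_const _

lemma gI_eq (a : ℝ) : gI a = (Set.Iic a).indicator 1 := by
  ext x; simp [gI, Set.indicator]

lemma gI_nonneg (a x : ℝ) : 0 ≤ gI a x := by unfold gI; split_ifs <;> norm_num
lemma gI_le (a x : ℝ) : gI a x ≤ 1 := by unfold gI; split_ifs <;> norm_num
lemma gI_bd (a x : ℝ) : ‖gI a x‖ ≤ 1 := by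
  rw [Real.norm_eq_abs, abs_of_nonneg (gI_nonneg _ _)]; exact gI_le _ _
lemma gC_bd (a x : ℝ) : ‖gC a x‖ ≤ 1 := by
  rw [Real.norm_eq_abs, abs_le, gC]
  constructor <;> linarith [gI_nonneg a x, gI_le a x, cdf_nonneg' a, cdf_le_one' a]

lemma integral_gI (a : ℝ) : ∫ x, gI a x ∂gam = stdGaussianCDF a := by
  rw [gI_eq, integral_indicator_one measurableSet_Iic]; rfl

lemma gI_int (a : ℝ) : Integrable (gI a) gam :=
  Integrable.of_bound (gI_meas a).aestronglyMeasurable 1 (ae_of_all _ (gI_bd a))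

lemma integral_gC (a : ℝ) : ∫ x, gC a x ∂gam = 0 := by
  unfold gC
  rw [integral_sub (gI_int a) (integrable_const _), integral_gI]; simp

lemma integral_gI_gI {n : ℕ} (u v : Fin n → ℝ) (hu : u ⬝ᵥ u = 1) (hv : v ⬝ᵥ v = 1)
    (hr : u ⬝ᵥ v ∈ Set.Ioc (-1:ℝ) 1) (a b : ℝ) :
    ∫ z, gI a (u ⬝ᵥ z) * gI b (v ⬝ᵥ z) ∂(gamN n) =
      stdGaussianCDF a * stdGaussianCDF b + Rf a b (u ⬝ᵥ v) := by
  rcases eq_or_lt_of_le hr.2 with h1 | h1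
  · have huv : u = v := by
      have : (u - v) ⬝ᵥ (u - v) = 0 := by
        rw [sub_dotProduct, dotProduct_sub, dotProduct_sub, dotProduct_comm v u, hu, hv, h1]; ring
      exact sub_eq_zero.1 (dotProduct_self_eq_zero.1 this)
    subst huv
    rw [h1, ← Rf_one, integral_single u hu (fun x => gI a x * gI b x)
      ((gI_meas a).mul (gI_meas b)), ← integral_gI]
    congr 1; ext x; simp only [gI]
    by_cases h1 : x ≤ a <;> by_cases h2 : x ≤ b <;> simp [h1, h2]
  · set ρ := u ⬝ᵥ v with hρ
    have hρI : ρ ∈ Set.Ioo (-1:ℝ) 1 := ⟨hr.1, h1⟩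
    have h0 := sq_pos_of_mem hρI
    have hs : 0 < √(1 - ρ ^ 2) := Real.sqrt_pos.2 h0
    have hFm : Measurable (Function.uncurry fun x y => gI a x * gI b y) :=
      ((gI_meas a).comp measurable_fst).mul ((gI_meas b).comp measurable_snd)
    rw [integral_double u v hu hv (by rw [← hρ]; exact h0.le) (fun x y => gI a x * gI b y) hFm,
      ← hρ, ← Gf_eq a b ρ hρI, integral_prod]
    · have : ∀ x, ∫ y, gI a x * gI b (ρ * x + √(1 - ρ ^ 2) * y) ∂gam =
          gI a x * stdGaussianCDF ((b - ρ * x) / √(1 - ρ ^ 2)) := by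
        intro x
        rw [integral_const_mul, ← integral_gI]
        congr 2; ext y
        simp only [gI]
        congr 1
        rw [le_div_iff₀ hs]
        apply propext; constructor <;> intro h <;> linarith
      simp only [this]
      rw [integral_gam, Gf, ← integral_indicator measurableSet_Iic]
      congr 1; ext x
      by_cases h : x ≤ a <;> simp [gI, h]
    · refine Integrable.of_bound (C := 1) ?_ (ae_of_all _ fun p => ?_)
      · apply Measurable.aestronglyMeasurable
        exact ((gI_meas a).comp measurable_fst).mul ((gI_meas b).comp (by fun_prop))
      · rw [norm_mul]
        exact mul_le_one₀ (gI_bd _ _) (norm_nonneg _) (gI_bd _ _)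

lemma int_comp {n : ℕ} (u : Fin n → ℝ) (h : ℝ → ℝ) (hm : Measurable h) (C : ℝ) (hb : ∀ x, ‖h x‖ ≤ C) :
    Integrable (fun z => h (u ⬝ᵥ z)) (gamN n) := by
  refine Integrable.of_bound (C := C) ?_ (ae_of_all _ fun p => hb _)
  have : Measurable fun z : Fin n → ℝ => u ⬝ᵥ z := by unfold dotProduct; fun_prop
  exact (hm.comp this).aestronglyMeasurable

lemma int_comp2 {n : ℕ} (u v : Fin n → ℝ) (h k : ℝ → ℝ) (hm : Measurable h) (km : Measurable k)
    (hb : ∀ x, ‖h x‖ ≤ 1) (kb : ∀ x, ‖k x‖ ≤ 1) :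
    Integrable (fun z => h (u ⬝ᵥ z) * k (v ⬝ᵥ z)) (gamN n) :=
  (int_comp v k km 1 kb).bdd_mul (int_comp u h hm 1 hb).aestronglyMeasurable (ae_of_all _ fun _ => hb _)

lemma integral_gC_gC {n : ℕ} (u v : Fin n → ℝ) (hu : u ⬝ᵥ u = 1) (hv : v ⬝ᵥ v = 1)
    (hr : u ⬝ᵥ v ∈ Set.Ioc (-1:ℝ) 1) (a b : ℝ) :
    ∫ z, gC a (u ⬝ᵥ z) * gC b (v ⬝ᵥ z) ∂(gamN n) = Rf a b (u ⬝ᵥ v) := by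
  have e : ∀ z : Fin n → ℝ, gC a (u ⬝ᵥ z) * gC b (v ⬝ᵥ z) =
      gI a (u ⬝ᵥ z) * gI b (v ⬝ᵥ z) - stdGaussianCDF a * gC b (v ⬝ᵥ z)
        - stdGaussianCDF b * gI a (u ⬝ᵥ z) := by
    intro z; simp only [gC]; ring
  simp_rw [e]
  have i1 := int_comp2 u v _ _ (gI_meas a) (gI_meas b) (gI_bd a) (gI_bd b)
  have i2 := (int_comp v _ (gC_meas b) 1 (gC_bd b)).const_mul (stdGaussianCDF a)
  have i3 := (int_comp u _ (gI_meas a) 1 (gI_bd a)).const_mul (stdGaussianCDF b)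
  rw [integral_sub (by exact i1.sub i2) i3, integral_sub i1 i2, integral_const_mul, integral_const_mul,
    integral_gI_gI u v hu hv hr, integral_single v hv _ (gC_meas b), integral_single u hu _ (gI_meas a),
    integral_gC, integral_gI]
  ring

lemma Rf_hasDerivAt_zero (a b : ℝ) : HasDerivAt (Rf a b) (pker a b 0) 0 := by
  have h := pker_contAt a b 0 (by norm_num)
  refine intervalIntegral.integral_hasDerivAt_right (by simp) ?_ h
  have hm : Measurable (pker a b) := by unfold pker; fun_prop
  exact hm.stronglyMeasurable.stronglyMeasurableAtFilter

lemma Rf_taylor (a b : ℝ) : ∃ C δ : ℝ, 0 ≤ C ∧ 0 < δ ∧ ∀ s, |s| ≤ δ →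
    |Rf a b s - pker a b 0 * s| ≤ C * s ^ 2 := by
  have hc : ContDiffAt ℝ 1 (pker a b) 0 := by
    unfold pker
    have h0 : (1 - (0:ℝ) ^ 2) ≠ 0 := by norm_num
    have h2 : 2 * (1 - (0:ℝ) ^ 2) ≠ 0 := by norm_num
    have h1 : ContDiffAt ℝ 1 (fun r : ℝ => √(1 - r ^ 2)) 0 :=
      ContDiffAt.sqrt (by fun_prop) h0
    refine ContDiffAt.mul (ContDiffAt.inv (contDiffAt_const.mul h1) ?_) ?_
    · simp
    · apply ContDiffAt.exp
      apply ContDiffAt.neg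
      exact ContDiffAt.div (by fun_prop) (by fun_prop) h2
  obtain ⟨L, t, ht, hL⟩ := hc.exists_lipschitzOnWith
  obtain ⟨δ, hδ, hball⟩ := Metric.mem_nhds_iff.1 ht
  refine ⟨L, min (δ / 2) (1/2), L.2, by positivity, fun s hs => ?_⟩
  have hs1 : |s| ≤ δ / 2 := hs.trans (min_le_left _ _)
  have hs2 : |s| ≤ 1 / 2 := hs.trans (min_le_right _ _)
  have hs3 := abs_le.1 hs2
  have e : Rf a b s - pker a b 0 * s = ∫ r in (0:ℝ)..s, (pker a b r - pker a b 0) := by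
    rw [intervalIntegral.integral_sub (pker_ii' a b 0 s (by norm_num) ⟨by linarith, by linarith⟩)
      (by simp)]
    simp [Rf, mul_comm]
  rw [e, ← Real.norm_eq_abs]
  have := intervalIntegral.norm_integral_le_of_norm_le_const (a := 0) (b := s) (C := L * |s|)
    (f := fun r => pker a b r - pker a b 0) (fun r hr => by
      have hr' : |r| ≤ |s| := by
        rw [Set.mem_uIoc] at hr
        rcases hr with hr | hr
        · rw [abs_of_pos hr.1]; exact hr.2.trans (le_abs_self s)
        · rw [abs_of_nonpos hr.2, abs_of_neg (by linarith)]; linarith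
      have h1 : r ∈ t := hball (by rw [mem_ball_zero_iff, Real.norm_eq_abs]; linarith)
      have h2 : (0:ℝ) ∈ t := hball (by simpa using hδ)
      have := hL.dist_le_mul r h1 0 h2
      rw [Real.dist_eq, Real.dist_eq, sub_zero] at this
      rw [Real.norm_eq_abs]
      exact this.trans (by gcongr))
  refine this.trans (le_of_eq ?_)
  rw [sub_zero, mul_assoc, ← sq, sq_abs]

def hk (q : ℕ → ℝ) (K : ℕ) (k : Fin K) (x : ℝ) : ℝ :=
  (open Classical in if x ∈ armSet q K k then 1 else 0) - 1 / (K:ℝ)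

lemma hk_rep {K : ℕ} (hK : 2 ≤ K) (k : Fin K)
    (q : ℕ → ℝ) (hq : ∀ m : ℕ, 0 < m → m < K → stdGaussianCDF (q m) = (m : ℝ) / K) : ∃ a b α β : ℝ, (∀ x, hk q K k x = β * gC b x - α * gC a x) ∧
    (∀ ρ, fkfun q K k ρ = β ^ 2 * Rf b b ρ + α ^ 2 * Rf a a ρ - 2 * (α * β) * Rf a b ρ) := by
  have hK0 : (K:ℝ) ≠ 0 := by positivity
  by_cases h0 : k.val = 0
  · refine ⟨q 1, q 1, 0, 1, fun x => ?_, fun ρ => ?_⟩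
    · simp [hk, armSet, h0, gC, gI, hq 1 (by norm_num) (by omega)]
    · simp [fkfun, h0, rfun_eq]
  by_cases h1 : k.val = K - 1
  · refine ⟨q (K - 1), q (K - 1), 1, 0, fun x => ?_, fun ρ => ?_⟩
    · have : ((K - 1 : ℕ) : ℝ) = K - 1 := by rw [Nat.cast_sub (by omega)]; simp
      simp only [hk, armSet, if_neg h0, if_pos h1, gC, gI, hq (K - 1) (by omega) (by omega), this]
      by_cases hx : x ≤ q (K - 1)
      · simp [hx, not_lt.2 hx]; field_simp; ring
      · simp [hx, not_le.1 hx]; field_simp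
    · simp only [fkfun, if_neg h0, if_pos h1, rfun_eq]; ring
  · have hk1 := k.2
    refine ⟨q k.val, q (k.val + 1), 1, 1, fun x => ?_, fun ρ => ?_⟩
    · have c1 := hq k.val (by omega) (by omega)
      have c2 := hq (k.val + 1) (by omega) (by omega)
      have hle : q k.val ≤ q (k.val + 1) := by
        by_contra hlt
        have hm := monotone_cdf gam (not_le.1 hlt).le
        rw [← cdf_eq_cdf, c1, c2] at hm
        push_cast at hm
        have : (0:ℝ) < K := by positivity
        rw [div_le_div_iff_of_pos_right this] at hm
        linarith
      simp only [hk, armSet, if_neg h0, if_neg h1, gC, gI, c1, c2]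
      push_cast
      by_cases hx : x ≤ q k.val
      · simp [hx, not_lt.2 hx, hx.trans hle]; field_simp; ring
      · by_cases hx' : x ≤ q (k.val + 1)
        · simp [hx, hx', not_le.1 hx]; field_simp; ring
        · simp [hx, hx']; field_simp; ring
    · simp only [fkfun, if_neg h0, if_neg h1, rfun_eq]; ring

lemma hk_meas {K : ℕ} (hK : 2 ≤ K) (k : Fin K)
    (q : ℕ → ℝ) (hq : ∀ m : ℕ, 0 < m → m < K → stdGaussianCDF (q m) = (m : ℝ) / K) : Measurable (hk q K k) := by
  obtain ⟨a, b, α, β, h1, -⟩ := hk_rep hK k q hq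
  rw [funext h1]
  exact ((gC_meas b).const_mul β).sub ((gC_meas a).const_mul α)

lemma hk_bd {K : ℕ} (hK : 2 ≤ K) (k : Fin K)
    (q : ℕ → ℝ)  (x : ℝ) : ‖hk q K k x‖ ≤ 1 := by
  have hK0 : (0:ℝ) < K := by positivity
  have h1 : (1:ℝ) / K ≤ 1 := by rw [div_le_one hK0]; exact_mod_cast (by omega)
  have h2 : (0:ℝ) ≤ 1 / K := by positivity
  rw [Real.norm_eq_abs, abs_le]
  unfold hk
  split_ifs <;> constructor <;> linarith

lemma gC_int (a : ℝ) : Integrable (gC a) gam :=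
  Integrable.of_bound (gC_meas a).aestronglyMeasurable 1 (ae_of_all _ (gC_bd a))

lemma hk_mean {K : ℕ} (hK : 2 ≤ K) (k : Fin K)
    (q : ℕ → ℝ) (hq : ∀ m : ℕ, 0 < m → m < K → stdGaussianCDF (q m) = (m : ℝ) / K) : ∫ x, hk q K k x ∂gam = 0 := by
  obtain ⟨a, b, α, β, h1, -⟩ := hk_rep hK k q hq
  simp_rw [h1]
  rw [integral_sub ((gC_int b).const_mul β) ((gC_int a).const_mul α), integral_const_mul,
    integral_const_mul, integral_gC, integral_gC]; simp

lemma hk_var {K : ℕ} (hK : 2 ≤ K) (k : Fin K)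
    (q : ℕ → ℝ) (hq : ∀ m : ℕ, 0 < m → m < K → stdGaussianCDF (q m) = (m : ℝ) / K) : ∫ x, hk q K k x ^ 2 ∂gam = ((K:ℝ) - 1) / K ^ 2 := by
  have hK0 : (K:ℝ) ≠ 0 := by positivity
  have e : ∀ x, hk q K k x ^ 2 = (1 - 2 / (K:ℝ)) * hk q K k x + ((K:ℝ) - 1) / K ^ 2 := by
    intro x; unfold hk; split_ifs <;> field_simp <;> ring
  simp_rw [e]
  have hi : Integrable (hk q K k) gam :=
    Integrable.of_bound (hk_meas hK k q hq).aestronglyMeasurable 1 (ae_of_all _ (hk_bd hK k q))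
  rw [integral_add (hi.const_mul _) (integrable_const _), integral_const_mul, hk_mean hK k q hq]
  simp

lemma hk_cov {K : ℕ} (hK : 2 ≤ K) (k : Fin K)
    (q : ℕ → ℝ) (hq : ∀ m : ℕ, 0 < m → m < K → stdGaussianCDF (q m) = (m : ℝ) / K) {n : ℕ} (u v : Fin n → ℝ) (hu : u ⬝ᵥ u = 1) (hv : v ⬝ᵥ v = 1)
    (hr : u ⬝ᵥ v ∈ Set.Ioc (-1:ℝ) 1) :
    ∫ z, hk q K k (u ⬝ᵥ z) * hk q K k (v ⬝ᵥ z) ∂(gamN n) = fkfun q K k (u ⬝ᵥ v) := by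
  obtain ⟨a, b, α, β, h1, h2⟩ := hk_rep hK k q hq
  rw [h2]
  have i := fun c d : ℝ => int_comp2 u v _ _ (gC_meas c) (gC_meas d) (gC_bd c) (gC_bd d)
  have e : ∀ z : Fin n → ℝ, hk q K k (u ⬝ᵥ z) * hk q K k (v ⬝ᵥ z) =
      β ^ 2 * (gC b (u ⬝ᵥ z) * gC b (v ⬝ᵥ z)) + α ^ 2 * (gC a (u ⬝ᵥ z) * gC a (v ⬝ᵥ z))
      - (α * β) * (gC a (u ⬝ᵥ z) * gC b (v ⬝ᵥ z)) - (α * β) * (gC b (u ⬝ᵥ z) * gC a (v ⬝ᵥ z)) := by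
    intro z; rw [h1, h1]; ring
  simp_rw [e]
  rw [integral_sub (by exact (((i b b).const_mul _).add ((i a a).const_mul _)).sub ((i a b).const_mul _))
      ((i b a).const_mul _),
    integral_sub (by exact (((i b b).const_mul _).add ((i a a).const_mul _))) ((i a b).const_mul _),
    integral_add ((i b b).const_mul _) ((i a a).const_mul _)]
  simp only [integral_const_mul, integral_gC_gC u v hu hv hr]
  rw [Rf_symm b a]; ring

lemma fk_one {K : ℕ} (hK : 2 ≤ K) (k : Fin K)
    (q : ℕ → ℝ) (hq : ∀ m : ℕ, 0 < m → m < K → stdGaussianCDF (q m) = (m : ℝ) / K) : fkfun q K k 1 = ((K:ℝ) - 1) / K ^ 2 := by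
  have h := hk_cov hK k q hq (n := 1) (fun _ => 1) (fun _ => 1) (by simp [dotProduct]) (by simp [dotProduct])
    (by simp [dotProduct])
  have e : (fun _ : Fin 1 => (1:ℝ)) ⬝ᵥ (fun _ => 1) = 1 := by simp [dotProduct]
  rw [e] at h
  rw [← h, ← hk_var hK k q hq, ← integral_single (fun _ : Fin 1 => (1:ℝ)) e (fun x => hk q K k x ^ 2)
    ((hk_meas hK k q hq).pow_const 2)]
  congr 1; ext z; ring

lemma fk_zero {K : ℕ} (hK : 2 ≤ K) (k : Fin K)
    (q : ℕ → ℝ) (hq : ∀ m : ℕ, 0 < m → m < K → stdGaussianCDF (q m) = (m : ℝ) / K) : fkfun q K k 0 = 0 := by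
  obtain ⟨a, b, α, β, h1, h2⟩ := hk_rep hK k q hq
  rw [h2]; simp [Rf_zero]

lemma fk_cont {K : ℕ} (hK : 2 ≤ K) (k : Fin K)
    (q : ℕ → ℝ) (hq : ∀ m : ℕ, 0 < m → m < K → stdGaussianCDF (q m) = (m : ℝ) / K) : ContinuousOn (fkfun q K k) (Set.Icc (-1) 1) := by
  obtain ⟨a, b, α, β, h1, h2⟩ := hk_rep hK k q hq
  rw [funext h2]
  exact (((Rf_contOn b b).const_mul _).add ((Rf_contOn a a).const_mul _)).sub
    ((Rf_contOn a b).const_mul _)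

lemma fk_taylor {K : ℕ} (hK : 2 ≤ K) (k : Fin K)
    (q : ℕ → ℝ) (hq : ∀ m : ℕ, 0 < m → m < K → stdGaussianCDF (q m) = (m : ℝ) / K) : ∃ C δ : ℝ, 0 ≤ C ∧ 0 < δ ∧ ∀ s, |s| ≤ δ →
    |fkfun q K k s - deriv (fkfun q K k) 0 * s| ≤ C * s ^ 2 := by
  obtain ⟨a, b, α, β, h1, h2⟩ := hk_rep hK k q hq
  have hd : deriv (fkfun q K k) 0 =
      β ^ 2 * pker b b 0 + α ^ 2 * pker a a 0 - 2 * (α * β) * pker a b 0 := by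
    rw [funext h2]
    exact ((((Rf_hasDerivAt_zero b b).const_mul _).add ((Rf_hasDerivAt_zero a a).const_mul _)).sub
      ((Rf_hasDerivAt_zero a b).const_mul _)).deriv
  obtain ⟨C1, d1, c1, p1, t1⟩ := Rf_taylor b b
  obtain ⟨C2, d2, c2, p2, t2⟩ := Rf_taylor a a
  obtain ⟨C3, d3, c3, p3, t3⟩ := Rf_taylor a b
  refine ⟨β ^ 2 * C1 + α ^ 2 * C2 + |2 * (α * β)| * C3, min d1 (min d2 d3), by positivity,
    by positivity, fun s hs => ?_⟩
  have t1 := t1 s (hs.trans (min_le_left _ _))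
  have t2 := t2 s (hs.trans ((min_le_right _ _).trans (min_le_left _ _)))
  have t3 := t3 s (hs.trans ((min_le_right _ _).trans (min_le_right _ _)))
  rw [hd, h2]
  have e : β ^ 2 * Rf b b s + α ^ 2 * Rf a a s - 2 * (α * β) * Rf a b s -
      (β ^ 2 * pker b b 0 + α ^ 2 * pker a a 0 - 2 * (α * β) * pker a b 0) * s =
      β ^ 2 * (Rf b b s - pker b b 0 * s) + α ^ 2 * (Rf a a s - pker a a 0 * s)
      - 2 * (α * β) * (Rf a b s - pker a b 0 * s) := by ring
  rw [e]
  calc _ ≤ |β ^ 2 * (Rf b b s - pker b b 0 * s)| + |α ^ 2 * (Rf a a s - pker a a 0 * s)|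
      + |2 * (α * β) * (Rf a b s - pker a b 0 * s)| := by
        refine (abs_sub _ _).trans ?_
        gcongr
        exact abs_add_le _ _
    _ = β ^ 2 * |Rf b b s - pker b b 0 * s| + α ^ 2 * |Rf a a s - pker a a 0 * s|
      + |2 * (α * β)| * |Rf a b s - pker a b 0 * s| := by
        rw [abs_mul, abs_mul, abs_mul (2 * (α * β)), abs_of_nonneg (sq_nonneg β), abs_of_nonneg (sq_nonneg α)]
    _ ≤ β ^ 2 * (C1 * s ^ 2) + α ^ 2 * (C2 * s ^ 2) + |2 * (α * β)| * (C3 * s ^ 2) := by gcongr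
    _ = _ := by ring

def SmallM {n : ℕ} (E : Matrix (Fin n) (Fin n) ℝ) (ε : ℝ) : Prop :=
  (∀ a b : Fin n → ℝ, |∑ i, ∑ j, a i * E i j * b j| ≤ ε * (∑ i, a i ^ 2 + ∑ i, b i ^ 2) / 2) ∧
  (∀ i, ∑ j, E i j ^ 2 ≤ ε ^ 2) ∧ (∀ j, ∑ i, E i j ^ 2 ≤ ε ^ 2)

lemma quad_close (f : ℝ → ℝ) (c : ℝ) (hcont : ContinuousOn f (Set.Icc (-1) 1))
    (ht : ∃ C δ : ℝ, 0 ≤ C ∧ 0 < δ ∧ ∀ s, |s| ≤ δ → |f s - c * s| ≤ C * s ^ 2)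
    (δ : ℝ) (hδ : 0 < δ) : ∃ ε > 0, ∀ (n : ℕ) (N : Matrix (Fin n) (Fin n) ℝ),
      SmallM (N - 1) ε → (∀ i, N i i ≤ 1) → ∀ a b : Fin n → ℝ,
      |∑ i, ∑ j, a i * f (N i j) * b j - f 1 * ∑ i, a i * b i| ≤
        δ * (∑ i, a i ^ 2 + ∑ i, b i ^ 2) := by
  obtain ⟨C, d0, hC, hd0, ht⟩ := ht
  obtain ⟨d1, hd1, hc1⟩ := Metric.continuousOn_iff.1 hcont 1 (by norm_num) (δ / 2) (by positivity)
  set ε := min (min d0 (d1 / 2)) (min 1 (δ / (2 * |c| + C + 1))) with hε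
  have hε0 : 0 < ε := by positivity
  have e1 : ε ≤ d0 := (min_le_left _ _).trans (min_le_left _ _)
  have e2 : ε ≤ d1 / 2 := (min_le_left _ _).trans (min_le_right _ _)
  have e3 : ε ≤ 1 := (min_le_right _ _).trans (min_le_left _ _)
  have e4 : ε * (2 * |c| + C) ≤ δ := by
    have : ε ≤ δ / (2 * |c| + C + 1) := (min_le_right _ _).trans (min_le_right _ _)
    rw [le_div_iff₀ (by positivity)] at this
    nlinarith
  refine ⟨ε, hε0, fun n N hN hdiag a b => ?_⟩
  obtain ⟨hq, hrow, hcol⟩ := hN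
  set E := N - 1 with hE
  have hEabs : ∀ i j, |E i j| ≤ ε := by
    intro i j
    refine abs_le_of_sq_le_sq ?_ hε0.le
    exact (Finset.single_le_sum (f := fun j => E i j ^ 2) (fun _ _ => sq_nonneg _) (Finset.mem_univ j)).trans (hrow i)
  let R : Matrix (Fin n) (Fin n) ℝ := fun i j => f (N i j) - f 1 * (1 : Matrix (Fin n) (Fin n) ℝ) i j - c * E i j
  let κ := δ / 2 + |c| * ε
  have hR : ∀ i j, |R i j| ≤ C * E i j ^ 2 + κ * (1 : Matrix (Fin n) (Fin n) ℝ) i j := by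
    intro i j
    by_cases hij : i = j
    · subst hij
      have hE' : E i i = N i i - 1 := by simp [hE]
      have hab := hEabs i i
      rw [hE'] at hab
      have hab' := abs_le.1 hab
      have h1 := hc1 (N i i) ⟨by linarith, hdiag i⟩ (by rw [Real.dist_eq]; linarith)
      rw [Real.dist_eq] at h1
      have h2 : |R i i| ≤ |f (N i i) - f 1| + |c| * |E i i| := by
        simp only [R, Matrix.one_apply_eq, mul_one]
        rw [← abs_mul]; exact abs_sub _ _
      have h3 : |c| * |E i i| ≤ |c| * ε := by gcongr; exact hEabs i i
      have h4 : 0 ≤ C * E i i ^ 2 := by positivity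
      simp only [Matrix.one_apply_eq, mul_one, κ]
      linarith
    · have hE' : E i j = N i j := by simp [hE, hij]
      have hR' : R i j = f (N i j) - c * N i j := by
        simp [R, hij, hE']
      rw [hR', Matrix.one_apply_ne hij, mul_zero, add_zero, hE']
      exact ht _ (by rw [← hE']; exact (hEabs i j).trans e1)
  have hsplit : ∑ i, ∑ j, a i * f (N i j) * b j - f 1 * ∑ i, a i * b i =
      c * (∑ i, ∑ j, a i * E i j * b j) + ∑ i, ∑ j, a i * R i j * b j := by
    have h1 : ∑ i, a i * b i = ∑ i, ∑ j, a i * (1 : Matrix (Fin n) (Fin n) ℝ) i j * b j := by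
      simp [Matrix.one_apply]
    rw [h1]
    simp only [Finset.mul_sum, ← Finset.sum_add_distrib, ← Finset.sum_sub_distrib]
    refine Finset.sum_congr rfl fun i _ => Finset.sum_congr rfl fun j _ => ?_
    simp only [R]; ring
  have hRR : |∑ i, ∑ j, a i * R i j * b j| ≤ (C * ε ^ 2 + κ) * (∑ i, a i ^ 2 + ∑ i, b i ^ 2) / 2 := by
    have hκ : 0 ≤ κ := by positivity
    set W : Matrix (Fin n) (Fin n) ℝ := fun i j => C * E i j ^ 2 + κ * (1 : Matrix (Fin n) (Fin n) ℝ) i j with hW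
    have hr : ∀ i, ∑ j, W i j ≤ C * ε ^ 2 + κ := by
      intro i
      simp only [hW, Finset.sum_add_distrib, ← Finset.mul_sum]
      have : ∑ j, (1 : Matrix (Fin n) (Fin n) ℝ) i j = 1 := by simp [Matrix.one_apply]
      rw [this, mul_one]
      gcongr; exact hrow i
    have hcl : ∀ j, ∑ i, W i j ≤ C * ε ^ 2 + κ := by
      intro i
      simp only [hW, Finset.sum_add_distrib, ← Finset.mul_sum]
      have : ∑ j, (1 : Matrix (Fin n) (Fin n) ℝ) j i = 1 := by simp [Matrix.one_apply]
      rw [this, mul_one]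
      gcongr; exact hcol i
    calc _ ≤ ∑ i, ∑ j, |a i * R i j * b j| := by
          refine (Finset.abs_sum_le_sum_abs _ _).trans ?_
          gcongr
          exact Finset.abs_sum_le_sum_abs _ _
      _ ≤ ∑ i, ∑ j, (W i j * a i ^ 2 + W i j * b j ^ 2) / 2 := by
          gcongr with i _ j _
          rw [abs_mul, abs_mul]
          have h1 : |a i| * |b j| ≤ (a i ^ 2 + b j ^ 2) / 2 := by
            rw [← sq_abs (a i), ← sq_abs (b j)]; nlinarith [sq_nonneg (|a i| - |b j|)]
          have h2 := hR i j
          calc |a i| * |R i j| * |b j| = |R i j| * (|a i| * |b j|) := by ring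
            _ ≤ W i j * ((a i ^ 2 + b j ^ 2) / 2) := by
              apply mul_le_mul h2 h1 (by positivity)
              exact (abs_nonneg _).trans h2
            _ = _ := by ring
      _ = ((∑ i, (∑ j, W i j) * a i ^ 2) + ∑ j, (∑ i, W i j) * b j ^ 2) / 2 := by
          simp only [← Finset.sum_div, Finset.sum_add_distrib, Finset.sum_mul]
          congr 2
          exact Finset.sum_comm
      _ ≤ ((∑ i, (C * ε ^ 2 + κ) * a i ^ 2) + ∑ j, (C * ε ^ 2 + κ) * b j ^ 2) / 2 := by
          gcongr
          · exact hr _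
          · exact hcl _
      _ = _ := by rw [← Finset.mul_sum, ← Finset.mul_sum]; ring
  rw [hsplit]
  have hS : 0 ≤ ∑ i, a i ^ 2 + ∑ i, b i ^ 2 := by positivity
  set S := ∑ i, a i ^ 2 + ∑ i, b i ^ 2
  calc _ ≤ |c| * |∑ i, ∑ j, a i * E i j * b j| + |∑ i, ∑ j, a i * R i j * b j| := by
        rw [← abs_mul]; exact abs_add_le _ _
    _ ≤ |c| * (ε * S / 2) + (C * ε ^ 2 + κ) * S / 2 := by gcongr; exact hq a b
    _ = (2 * |c| * ε + C * ε * ε + δ / 2) / 2 * S := by simp only [κ]; ring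
    _ ≤ δ * S := by
        gcongr
        nlinarith [mul_nonneg hC hε0.le, abs_nonneg c]

section norm
open scoped Matrix.Norms.L2Operator

lemma opNorm_eq {n : ℕ} (A : Matrix (Fin n) (Fin n) ℝ) : opNorm A = ‖A‖ := rfl

lemma smallM_of_norm {n : ℕ} (E : Matrix (Fin n) (Fin n) ℝ) (ε : ℝ) (h : ‖E‖ ≤ ε) : SmallM E ε := by
  have hε : 0 ≤ ε := (norm_nonneg _).trans h
  have hmv : ∀ (F : Matrix (Fin n) (Fin n) ℝ), ‖F‖ ≤ ε → ∀ x : Fin n → ℝ,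
      ∑ i, (F *ᵥ x) i ^ 2 ≤ ε ^ 2 * ∑ i, x i ^ 2 := by
    intro F hF x
    have := Matrix.l2_opNorm_mulVec F (WithLp.toLp 2 x)
    have h2 : ‖WithLp.toLp 2 (F *ᵥ x)‖ ≤ ε * ‖(WithLp.toLp 2 x : EuclideanSpace ℝ (Fin n))‖ := by
      refine this.trans ?_
      gcongr
    have h3 := pow_le_pow_left₀ (norm_nonneg _) h2 2
    rw [mul_pow, EuclideanSpace.norm_sq_eq, EuclideanSpace.norm_sq_eq] at h3
    simpa using h3
  have hT : ‖Eᵀ‖ ≤ ε := by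
    have := Matrix.l2_opNorm_conjTranspose E
    rw [Matrix.conjTranspose_eq_transpose_of_trivial] at this
    rwa [this]
  refine ⟨fun a b => ?_, fun i => ?_, fun j => ?_⟩
  · have e : ∑ i, ∑ j, a i * E i j * b j = ∑ i, a i * (E *ᵥ b) i := by
      simp only [Matrix.mulVec, dotProduct, Finset.mul_sum, mul_assoc]
    rw [e]
    have h1 := hmv E h b
    have h2 := Finset.sum_mul_sq_le_sq_mul_sq Finset.univ a (E *ᵥ b)
    refine abs_le_of_sq_le_sq ?_ (by positivity)
    have hA : 0 ≤ ∑ i, a i ^ 2 := by positivity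
    have hB : 0 ≤ ∑ i, b i ^ 2 := by positivity
    calc _ ≤ (∑ i, a i ^ 2) * ∑ i, (E *ᵥ b) i ^ 2 := h2
      _ ≤ (∑ i, a i ^ 2) * (ε ^ 2 * ∑ i, b i ^ 2) := by gcongr
      _ ≤ _ := by
        nlinarith [mul_nonneg (sq_nonneg ε) (sq_nonneg (∑ i, a i ^ 2 - ∑ i, b i ^ 2))]
  · have := hmv Eᵀ hT (Pi.single i 1)
    simpa [Pi.single_apply] using this
  · have := hmv E h (Pi.single j 1)
    simpa [Pi.single_apply] using this

end norm

section norm2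
open scoped Matrix.Norms.L2Operator

lemma pgd_rep {n d : ℕ} (X : Matrix (Fin n) (Fin d) ℝ) (hX : ∀ i, ∑ j, X i j ^ 2 = 1) (η c e : ℝ)
    (he : e = |η * c| * opNorm (X * Xᵀ - 1)) :
    ∃ B : Matrix (Fin n) (Fin n) ℝ, pgd X η c = B * Bᵀ ∧ SmallM (B - 1) (2 * e) ∧
      SmallM (B * Bᵀ - 1) (2 * e * (2 * e + 2)) ∧ (∀ i, B i ⬝ᵥ B i = 1) ∧ (∀ i, B i i ≤ 1) := by
  set U : Matrix (Fin n) (Fin n) ℝ := 1 - (η * c) • (X * Xᵀ - 1) with hU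
  have hUn : ‖U - 1‖ = e := by
    have : U - 1 = -((η * c) • (X * Xᵀ - 1)) := by rw [hU]; abel
    rw [this, norm_neg, norm_smul, he, opNorm_eq, Real.norm_eq_abs]
  have he0 : 0 ≤ e := hUn ▸ norm_nonneg _
  have hUs := smallM_of_norm (U - 1) e hUn.le
  have hUd : ∀ i, U i i = 1 := by
    intro i
    have : (X * Xᵀ) i i = 1 := by rw [← hX i]; simp [Matrix.mul_apply, sq]
    simp [hU, this]
  have hUT : Uᵀ = U := by
    simp [hU, Matrix.transpose_sub, Matrix.transpose_smul, Matrix.transpose_mul]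
  set s : Fin n → ℝ := fun i => √(∑ l, U i l ^ 2) with hs
  have hs1 : ∀ i, 1 ≤ s i := by
    intro i
    simp only [hs]
    rw [Real.one_le_sqrt]
    have := Finset.single_le_sum (f := fun l => U i l ^ 2) (fun _ _ => sq_nonneg _) (Finset.mem_univ i)
    simpa [hUd] using this
  have hs0 : ∀ i, 0 < s i := fun i => lt_of_lt_of_le one_pos (hs1 i)
  have hs2 : ∀ i, s i ≤ 1 + e := by
    intro i
    simp only [hs]
    rw [Real.sqrt_le_left (by positivity)]
    have h1 := hUs.2.1 i
    have h2 : ∑ l, U i l ^ 2 = ∑ l, (U - 1) i l ^ 2 + 1 := by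
      have h3 : ∀ l, U i l ^ 2 = (U - 1) i l ^ 2 + (1 : Matrix (Fin n) (Fin n) ℝ) i l := by
        intro l
        by_cases hl : i = l
        · subst hl; simp [hUd]
        · simp [hl]
      simp_rw [h3]
      rw [Finset.sum_add_distrib]
      simp [Matrix.one_apply]
    rw [h2]
    nlinarith
  set B : Matrix (Fin n) (Fin n) ℝ := Matrix.diagonal (fun i => (s i)⁻¹) * U with hB
  have hBij : ∀ i j, B i j = (s i)⁻¹ * U i j := fun i j => by
    rw [hB, Matrix.diagonal_mul]
  have hD1 : ‖(Matrix.diagonal (fun i => (s i)⁻¹) : Matrix (Fin n) (Fin n) ℝ)‖ ≤ 1 := by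
    rw [Matrix.l2_opNorm_diagonal, pi_norm_le_iff_of_nonneg (by norm_num)]
    intro i
    rw [Real.norm_eq_abs, abs_of_pos (inv_pos.2 (hs0 i))]
    exact inv_le_one_of_one_le₀ (hs1 i)
  have hD2 : ‖(Matrix.diagonal (fun i => (s i)⁻¹) - 1 : Matrix (Fin n) (Fin n) ℝ)‖ ≤ e := by
    rw [← Matrix.diagonal_one, Matrix.diagonal_sub, Matrix.l2_opNorm_diagonal,
      pi_norm_le_iff_of_nonneg he0]
    intro i
    rw [Real.norm_eq_abs, abs_sub_comm, abs_of_nonneg (sub_nonneg.2 (inv_le_one_of_one_le₀ (hs1 i)))]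
    have : 1 - (s i)⁻¹ = (s i - 1) * (s i)⁻¹ := by
      have := (hs0 i).ne'
      field_simp
    rw [this]
    calc _ ≤ (s i - 1) * 1 := by
          gcongr
          · linarith [hs1 i]
          · exact inv_le_one_of_one_le₀ (hs1 i)
      _ ≤ e := by linarith [hs2 i]
  have hBn : ‖B - 1‖ ≤ 2 * e := by
    have : B - 1 = Matrix.diagonal (fun i => (s i)⁻¹) * (U - 1) + (Matrix.diagonal (fun i => (s i)⁻¹) - 1) := by
      rw [Matrix.mul_sub, Matrix.mul_one, ← hB, sub_add_sub_cancel]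
    rw [this]
    calc _ ≤ ‖(Matrix.diagonal (fun i => (s i)⁻¹) : Matrix (Fin n) (Fin n) ℝ)‖ * ‖U - 1‖ + e :=
          (norm_add_le _ _).trans (add_le_add (Matrix.l2_opNorm_mul _ _) hD2)
      _ ≤ 1 * e + e := by rw [hUn]; gcongr
      _ = _ := by ring
  have hBT : ‖(B - 1)ᵀ‖ ≤ 2 * e := by
    have := Matrix.l2_opNorm_conjTranspose (B - 1)
    rw [Matrix.conjTranspose_eq_transpose_of_trivial] at this
    rwa [this]
  refine ⟨B, ?_, smallM_of_norm _ _ hBn, smallM_of_norm _ _ ?_, ?_, ?_⟩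
  · ext i j
    have h1 : (B * Bᵀ) i j = (s i)⁻¹ * (s j)⁻¹ * (U * U) i j := by
      rw [Matrix.mul_apply, Matrix.mul_apply, Finset.mul_sum]
      refine Finset.sum_congr rfl fun l _ => ?_
      rw [Matrix.transpose_apply, hBij, hBij, ← congrFun (congrFun hUT l) j, Matrix.transpose_apply]
      ring
    rw [h1]
    show (U * U) i j / (s i * s j) = _
    rw [div_eq_mul_inv, mul_inv]; ring
  · have : B * Bᵀ - 1 = (B - 1) * (B - 1)ᵀ + (B - 1) + (B - 1)ᵀ := by
      rw [Matrix.transpose_sub, Matrix.transpose_one]; noncomm_ring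
    rw [this]
    calc _ ≤ ‖B - 1‖ * ‖(B - 1)ᵀ‖ + ‖B - 1‖ + ‖(B - 1)ᵀ‖ :=
          (norm_add_le _ _).trans (add_le_add ((norm_add_le _ _).trans
            (add_le_add (Matrix.l2_opNorm_mul _ _) le_rfl)) le_rfl)
      _ ≤ (2 * e) * (2 * e) + 2 * e + 2 * e := by gcongr
      _ = _ := by ring
  · intro i
    have h1 : B i ⬝ᵥ B i = ((s i)⁻¹) ^ 2 * ∑ l, U i l ^ 2 := by
      simp only [dotProduct, hBij, Finset.mul_sum]
      refine Finset.sum_congr rfl fun l _ => by ring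
    have h2 : ∑ l, U i l ^ 2 = s i ^ 2 := by
      simp only [hs]; rw [Real.sq_sqrt (by positivity)]
    rw [h1, h2]
    have := (hs0 i).ne'
    field_simp
  · intro i
    rw [hBij, hUd, mul_one]
    exact inv_le_one_of_one_le₀ (hs1 i)

end norm2

/-- PSD square root stability. -/
lemma psd_sqrt_close {n : ℕ} (Q : Matrix (Fin n) (Fin n) ℝ) (hQ : Q.PosSemidef) (v0 δ : ℝ)
    (hv0 : 0 ≤ v0)
    (h : ∀ a b : Fin n → ℝ, |∑ i, ∑ j, a i * (Q * Q) i j * b j - v0 * ∑ i, a i * b i| ≤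
        δ * (∑ i, a i ^ 2 + ∑ i, b i ^ 2)) (y : Fin n → ℝ) :
    (√v0 - δ) * ∑ i, ((Q *ᵥ y) i - √v0 * y i) ^ 2 ≤ δ * ∑ i, y i ^ 2 := by
  set s := √v0 with hs
  have hss : s * s = v0 := Real.mul_self_sqrt hv0
  set w : Fin n → ℝ := Q *ᵥ y - s • y with hw
  have h1 := h w y
  have e1 : ∑ i, ∑ j, w i * (Q * Q) i j * y j = w ⬝ᵥ ((Q * Q) *ᵥ y) := by
    simp only [Matrix.mulVec, dotProduct, Finset.mul_sum, mul_assoc]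
  have e2 : (Q * Q) *ᵥ y = Q *ᵥ w + s • w + v0 • y := by
    rw [hw, Matrix.mulVec_sub, Matrix.mulVec_mulVec, Matrix.mulVec_smul, smul_sub, smul_smul, hss]
    abel
  have e3 : ∑ i, w i * y i = w ⬝ᵥ y := rfl
  have e4 : ∑ i, w i ^ 2 = w ⬝ᵥ w := by simp [dotProduct, sq]
  have e5 : ∑ i, ((Q *ᵥ y) i - s * y i) ^ 2 = w ⬝ᵥ w := by rw [← e4]; simp [hw]
  have hp : 0 ≤ w ⬝ᵥ (Q *ᵥ w) := by simpa using hQ.dotProduct_mulVec_nonneg w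
  rw [e1, e2, e3, e4, dotProduct_add, dotProduct_add, dotProduct_smul, dotProduct_smul] at h1
  have h2 := (abs_le.1 h1).2
  simp only [smul_eq_mul] at h2
  rw [e5]
  nlinarith

lemma SmallM.mono {n : ℕ} {E : Matrix (Fin n) (Fin n) ℝ} {ε ε' : ℝ} (h : SmallM E ε) (h0 : 0 ≤ ε)
    (hle : ε ≤ ε') : SmallM E ε' := by
  have h2 : ε ^ 2 ≤ ε' ^ 2 := by gcongr
  refine ⟨fun a b => (h.1 a b).trans ?_, fun i => (h.2.1 i).trans h2, fun i => (h.2.2 i).trans h2⟩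
  gcongr

lemma SmallM.mem {n : ℕ} {N : Matrix (Fin n) (Fin n) ℝ} {ε : ℝ} (h : SmallM (N - 1) ε) (h0 : 0 ≤ ε)
    (h1 : ε < 1) (hd : ∀ i, N i i ≤ 1) (i j : Fin n) : N i j ∈ Set.Ioc (-1:ℝ) 1 := by
  have h2 : (N - 1) i j ^ 2 ≤ ε ^ 2 := (Finset.single_le_sum (f := fun l => (N - 1) i l ^ 2)
    (fun _ _ => sq_nonneg _) (Finset.mem_univ j)).trans (h.2.1 i)
  have h3 := abs_le.1 (abs_le_of_sq_le_sq h2 h0)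
  by_cases hij : i = j
  · subst hij
    simp at h3
    exact ⟨by linarith [h3.1], hd i⟩
  · simp [hij] at h3
    exact ⟨by linarith [h3.1], by linarith [h3.2]⟩

def Sf (q : ℕ → ℝ) (K : ℕ) (k : Fin K) {n : ℕ} (a : Fin n → ℝ) (B : Matrix (Fin n) (Fin n) ℝ)
    (z : Fin n → ℝ) : ℝ := ∑ i, a i * hk q K k (B i ⬝ᵥ z)

lemma Sf_meas {K : ℕ} (hK : 2 ≤ K) (k : Fin K)
    (q : ℕ → ℝ) (hq : ∀ m : ℕ, 0 < m → m < K → stdGaussianCDF (q m) = (m : ℝ) / K) {n : ℕ}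
    (a : Fin n → ℝ) (B : Matrix (Fin n) (Fin n) ℝ) : Measurable (Sf q K k a B) := by
  unfold Sf
  refine Finset.measurable_sum _ fun i _ => ?_
  have : Measurable fun z : Fin n → ℝ => B i ⬝ᵥ z := by unfold dotProduct; fun_prop
  exact ((hk_meas hK k q hq).comp this).const_mul _

lemma Sf_bd {K : ℕ} (hK : 2 ≤ K) (k : Fin K) (q : ℕ → ℝ) {n : ℕ}
    (a : Fin n → ℝ) (B : Matrix (Fin n) (Fin n) ℝ) (z) : ‖Sf q K k a B z‖ ≤ ∑ i, |a i| := by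
  unfold Sf
  refine (norm_sum_le _ _).trans (Finset.sum_le_sum fun i _ => ?_)
  rw [norm_mul, Real.norm_eq_abs]
  exact mul_le_of_le_one_right (abs_nonneg _) (hk_bd hK k q _)

lemma Sf_int2 {K : ℕ} (hK : 2 ≤ K) (k : Fin K)
    (q : ℕ → ℝ) (hq : ∀ m : ℕ, 0 < m → m < K → stdGaussianCDF (q m) = (m : ℝ) / K) {n : ℕ}
    (a : Fin n → ℝ) (U V : Matrix (Fin n) (Fin n) ℝ) :
    Integrable (fun z => Sf q K k a U z * Sf q K k a V z) (gamN n) := by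
  refine Integrable.of_bound ((Sf_meas hK k q hq a U).mul (Sf_meas hK k q hq a V)).aestronglyMeasurable
    ((∑ i, |a i|) * (∑ i, |a i|)) (ae_of_all _ fun z => ?_)
  rw [norm_mul]
  exact mul_le_mul (Sf_bd hK k q a U z) (Sf_bd hK k q a V z) (norm_nonneg _)
    (Finset.sum_nonneg fun _ _ => abs_nonneg _)

lemma Sf_cross {K : ℕ} (hK : 2 ≤ K) (k : Fin K)
    (q : ℕ → ℝ) (hq : ∀ m : ℕ, 0 < m → m < K → stdGaussianCDF (q m) = (m : ℝ) / K) {n : ℕ}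
    (a : Fin n → ℝ) (U V : Matrix (Fin n) (Fin n) ℝ) (hU : ∀ i, U i ⬝ᵥ U i = 1)
    (hV : ∀ i, V i ⬝ᵥ V i = 1) (hr : ∀ i j, (U * Vᵀ) i j ∈ Set.Ioc (-1:ℝ) 1) :
    ∫ z, Sf q K k a U z * Sf q K k a V z ∂(gamN n) =
      ∑ i, ∑ j, a i * fkfun q K k ((U * Vᵀ) i j) * a j := by
  have hint : ∀ i j, Integrable (fun z => a i * hk q K k (U i ⬝ᵥ z) * (a j * hk q K k (V j ⬝ᵥ z)))
      (gamN n) := by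
    intro i j
    have := (int_comp2 (U i) (V j) _ _ (hk_meas hK k q hq) (hk_meas hK k q hq) (hk_bd hK k q)
      (hk_bd hK k q)).const_mul (a i * a j)
    refine this.congr (ae_of_all _ fun z => ?_)
    simp only; ring
  unfold Sf
  simp_rw [Finset.sum_mul_sum]
  rw [integral_finsetSum _ fun i _ => integrable_finsetSum _ fun j _ => hint i j]
  refine Finset.sum_congr rfl fun i _ => ?_
  rw [integral_finsetSum _ fun j _ => hint i j]
  refine Finset.sum_congr rfl fun j _ => ?_
  have h := hk_cov hK k q hq (U i) (V j) (hU i) (hV j) (hr i j)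
  have e : (U * Vᵀ) i j = U i ⬝ᵥ V j := rfl
  rw [e, ← h, mul_right_comm, ← integral_const_mul]
  congr 1; ext z; ring

lemma coupling {K : ℕ} (hK : 2 ≤ K) (k : Fin K)
    (q : ℕ → ℝ) (hq : ∀ m : ℕ, 0 < m → m < K → stdGaussianCDF (q m) = (m : ℝ) / K)
    (δ : ℝ) (hδ : 0 < δ) : ∃ ε > 0, ∀ (n : ℕ) (B : Matrix (Fin n) (Fin n) ℝ),
      SmallM (B - 1) ε → SmallM (B * Bᵀ - 1) ε → (∀ i, B i ⬝ᵥ B i = 1) → (∀ i, B i i ≤ 1) →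
      ((∀ a b : Fin n → ℝ, |∑ i, ∑ j, a i * fkfun q K k ((B * Bᵀ) i j) * b j -
          ((K:ℝ) - 1) / K ^ 2 * ∑ i, a i * b i| ≤ δ * (∑ i, a i ^ 2 + ∑ i, b i ^ 2)) ∧
      ∀ a : Fin n → ℝ,
        ∫ z, (Sf q K k a B z - Sf q K k a 1 z) ^ 2 ∂(gamN n) ≤ 8 * δ * ∑ i, a i ^ 2) := by
  obtain ⟨ε, hε, H⟩ := quad_close (fkfun q K k) _ (fk_cont hK k q hq) (fk_taylor hK k q hq) δ hδ
  rw [fk_one hK k q hq] at H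
  have hm0 : 0 < min ε (1 / 2) := by positivity
  have hm1 : min ε (1 / 2) < 1 := (min_le_right _ _).trans_lt (by norm_num)
  refine ⟨min ε (1/2), hm0, fun n B h1 h2 hu hd => ?_⟩
  have hd2 : ∀ i, (B * Bᵀ) i i ≤ 1 := fun i => (hu i).le
  have Q2 := H n (B * Bᵀ) (h2.mono hm0.le (min_le_left _ _)) hd2
  have Q1 := H n B (h1.mono hm0.le (min_le_left _ _)) hd
  refine ⟨Q2, fun a => ?_⟩
  have hone : ∀ i, (1 : Matrix (Fin n) (Fin n) ℝ) i ⬝ᵥ (1 : Matrix (Fin n) (Fin n) ℝ) i = 1 := by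
    intro i; simp [dotProduct, Matrix.one_apply]
  have s0 : SmallM ((1 : Matrix (Fin n) (Fin n) ℝ) - 1) ε := by
    refine ⟨fun a b => ?_, fun i => ?_, fun i => ?_⟩
    · simp; positivity
    · simp; positivity
    · simp; positivity
  have Q0 := H n 1 s0 (fun i => by simp)
  have c2 := Sf_cross hK k q hq a B B hu hu (h2.mem hm0.le hm1 hd2)
  have c1 := Sf_cross hK k q hq a B 1 hu hone (by
    rw [Matrix.transpose_one, Matrix.mul_one]; exact h1.mem hm0.le hm1 hd)
  have c0 := Sf_cross hK k q hq a 1 1 hone hone (by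
    intro i j; rw [Matrix.transpose_one, Matrix.mul_one, Matrix.one_apply]; split_ifs <;> norm_num)
  rw [Matrix.transpose_one, Matrix.mul_one] at c1 c0
  have e : ∀ z, (Sf q K k a B z - Sf q K k a 1 z) ^ 2 = Sf q K k a B z * Sf q K k a B z
      - 2 * (Sf q K k a B z * Sf q K k a 1 z) + Sf q K k a 1 z * Sf q K k a 1 z := fun z => by ring
  simp_rw [e]
  have I1 : Integrable (fun z => Sf q K k a B z * Sf q K k a B z
      - 2 * (Sf q K k a B z * Sf q K k a 1 z)) (gamN n) :=
    (Sf_int2 hK k q hq a B B).sub ((Sf_int2 hK k q hq a B 1).const_mul 2)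
  rw [integral_add I1 (Sf_int2 hK k q hq a 1 1), integral_sub (Sf_int2 hK k q hq a B B)
    ((Sf_int2 hK k q hq a B 1).const_mul 2), integral_const_mul, c2, c1, c0]
  have b2 := abs_le.1 (Q2 a a)
  have b1 := abs_le.1 (Q1 a a)
  have b0 := abs_le.1 (Q0 a a)
  linarith [b2.1, b2.2, b1.1, b1.2, b0.1, b0.2]

lemma prod_close {ι : Type*} (s : Finset ι) (x y : ι → ℂ) (hx : ∀ i, ‖x i‖ ≤ 1) (hy : ∀ i, ‖y i‖ ≤ 1) :
    ‖∏ i ∈ s, x i - ∏ i ∈ s, y i‖ ≤ ∑ i ∈ s, ‖x i - y i‖ := by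
  classical
  induction s using Finset.induction_on with
  | empty => simp
  | insert j s hj ih =>
    rw [Finset.prod_insert hj, Finset.prod_insert hj, Finset.sum_insert hj]
    have e : x j * ∏ i ∈ s, x i - y j * ∏ i ∈ s, y i =
      (x j - y j) * ∏ i ∈ s, x i + y j * (∏ i ∈ s, x i - ∏ i ∈ s, y i) := by ring
    rw [e]
    refine (norm_add_le _ _).trans ?_
    rw [norm_mul, norm_mul, norm_prod]
    refine add_le_add (mul_le_of_le_one_right (norm_nonneg _)
      (Finset.prod_le_one (fun _ _ => norm_nonneg _) fun i _ => hx i)) ?_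
    exact (mul_le_of_le_one_left (norm_nonneg _) (hy j)).trans ih

lemma charFun_diff {K : ℕ} (hK : 2 ≤ K) (k : Fin K)
    (q : ℕ → ℝ) (hq : ∀ m : ℕ, 0 < m → m < K → stdGaussianCDF (q m) = (m : ℝ) / K) (v : ℝ)
    (hv : v = √(((K:ℝ) - 1) / K ^ 2)) (c : ℝ) (hc : 0 < c) :
    ∃ d > 0, ∀ s : ℝ, |s| ≤ d →
      ‖charFun (gam.map (fun x => v⁻¹ * hk q K k x)) s - charFun gam s‖ ≤ c * s ^ 2 := by
  have hK1 : (0:ℝ) < (K:ℝ) - 1 := by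
    have : (2:ℝ) ≤ K := by exact_mod_cast hK
    linarith
  have hv0 : 0 < ((K:ℝ) - 1) / K ^ 2 := by positivity
  have hvp : 0 < v := by rw [hv]; positivity
  have hvv : v ^ 2 = ((K:ℝ) - 1) / K ^ 2 := by rw [hv, Real.sq_sqrt hv0.le]
  have t1 := taylor_charFun_two (P := gam) (X := fun x => v⁻¹ * hk q K k x)
    ((hk_meas hK k q hq).const_mul _).aemeasurable
    (by rw [integral_const_mul, hk_mean hK k q hq, mul_zero])
    (by
      simp only [Pi.pow_apply, mul_pow]
      rw [integral_const_mul, hk_var hK k q hq, ← hvv, inv_pow]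
      field_simp)
  have t2 := taylor_charFun_two (P := gam) (X := id) aemeasurable_id
    (by simp) (by
      have h := variance_id_gaussianReal (μ := 0) (v := 1)
      rw [variance_eq_integral aemeasurable_id] at h
      simpa using h)
  rw [Measure.map_id] at t2
  have t3 := (t1.sub t2).def hc
  rw [Metric.eventually_nhds_iff] at t3
  obtain ⟨d, hd, H⟩ := t3
  refine ⟨d / 2, by positivity, fun s hs => ?_⟩
  have := H (y := s) (by rw [Real.dist_eq, sub_zero]; linarith)
  simpa using this

lemma clt_iid {K : ℕ} (hK : 2 ≤ K) (k : Fin K)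
    (q : ℕ → ℝ) (hq : ∀ m : ℕ, 0 < m → m < K → stdGaussianCDF (q m) = (m : ℝ) / K)
    (a : ∀ n : ℕ, Fin n → ℝ) (ha : ∀ ε > (0:ℝ), ∀ᶠ n in atTop, ∀ i, |a n i| ≤ ε) (σ2 : ℝ)
    (hs : Tendsto (fun n => ((K:ℝ) - 1) / K ^ 2 * ∑ i, a n i ^ 2) atTop (𝓝 σ2)) (t : ℝ) :
    Tendsto (fun n => ∫ z, Complex.exp (t * (Sf q K k (a n) 1 z : ℝ) * Complex.I) ∂(gamN n)) atTop
      (𝓝 (Complex.exp (-(σ2 * t ^ 2 / 2 : ℝ)))) := by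
  have hK1 : (0:ℝ) < (K:ℝ) - 1 := by
    have : (2:ℝ) ≤ K := by exact_mod_cast hK
    linarith
  have hv0 : 0 < ((K:ℝ) - 1) / K ^ 2 := by positivity
  set v := √(((K:ℝ) - 1) / K ^ 2) with hv
  have hvp : 0 < v := by positivity
  have hvv : v ^ 2 = ((K:ℝ) - 1) / K ^ 2 := by rw [hv, Real.sq_sqrt hv0.le]
  have hXm : Measurable (fun x => v⁻¹ * hk q K k x) := (hk_meas hK k q hq).const_mul _
  have : IsProbabilityMeasure (gam.map (fun x => v⁻¹ * hk q K k x)) :=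
    Measure.isProbabilityMeasure_map hXm.aemeasurable
  set φ := charFun (gam.map (fun x => v⁻¹ * hk q K k x)) with hφ
  have e1 : ∀ n, ∫ z, Complex.exp (t * (Sf q K k (a n) 1 z : ℝ) * Complex.I) ∂(gamN n) =
      ∏ i, φ (t * v * a n i) := by
    intro n
    have h1 : ∀ z : Fin n → ℝ, Complex.exp (t * (Sf q K k (a n) 1 z : ℝ) * Complex.I) =
        ∏ i, Complex.exp (t * (a n i * hk q K k (z i) : ℝ) * Complex.I) := by
      intro z
      rw [← Complex.exp_sum]
      congr 1
      rw [← Finset.sum_mul, ← Finset.mul_sum, ← Complex.ofReal_sum]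
      simp [Sf, Matrix.one_apply, dotProduct]
    simp_rw [h1]
    rw [integral_fintype_prod_eq_prod (fun i x => Complex.exp (t * (a n i * hk q K k x : ℝ) * Complex.I))]
    refine Finset.prod_congr rfl fun i _ => ?_
    rw [hφ, charFun_apply_real, integral_map hXm.aemeasurable (by fun_prop)]
    congr 1; ext x
    congr 2
    push_cast
    have : (v:ℂ) ≠ 0 := by exact_mod_cast hvp.ne'
    field_simp
  have e2 : ∀ n, Complex.exp (-(((K:ℝ) - 1) / K ^ 2 * (∑ i, a n i ^ 2) * t ^ 2 / 2 : ℝ)) =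
      ∏ i, charFun gam (t * v * a n i) := by
    intro n
    simp_rw [charFun_gaussianReal]
    rw [← Complex.exp_sum]
    congr 1
    rw [← hvv]
    push_cast
    rw [Finset.mul_sum, Finset.sum_mul, Finset.sum_div, ← Finset.sum_neg_distrib]
    refine Finset.sum_congr rfl fun i _ => ?_
    simp; ring
  have lim2 : Tendsto (fun n => Complex.exp (-(((K:ℝ) - 1) / K ^ 2 * (∑ i, a n i ^ 2) * t ^ 2 / 2 : ℝ)))
      atTop (𝓝 (Complex.exp (-(σ2 * t ^ 2 / 2 : ℝ)))) := by
    have h : Continuous fun x : ℝ => Complex.exp (-(x * t ^ 2 / 2 : ℝ)) := by fun_prop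
    exact (h.tendsto σ2).comp hs
  have lim1 : Tendsto (fun n => ∏ i, φ (t * v * a n i) - ∏ i, charFun gam (t * v * a n i)) atTop (𝓝 0) := by
    rw [Metric.tendsto_atTop']
    have key : ∀ ε > (0:ℝ), ∀ᶠ n in atTop,
        ‖∏ i, φ (t * v * a n i) - ∏ i, charFun gam (t * v * a n i)‖ < ε := by
      intro ε hε
      have hden : 0 < t ^ 2 * (|σ2| + 1) + 1 := by positivity
      obtain ⟨d, hd, H⟩ := charFun_diff hK k q hq v hv (ε / (t ^ 2 * (|σ2| + 1) + 1)) (by positivity)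
      have hsb : ∀ᶠ n in atTop, ((K:ℝ) - 1) / K ^ 2 * ∑ i, a n i ^ 2 < |σ2| + 1 :=
        hs.eventually_lt_const (by linarith [le_abs_self σ2])
      filter_upwards [ha (d / (|t| * v + 1)) (by positivity), hsb] with n h1 h2
      refine (prod_close _ _ _ (fun i => norm_charFun_le_one _) (fun i => norm_charFun_le_one _)).trans_lt ?_
      calc _ ≤ ∑ i, ε / (t ^ 2 * (|σ2| + 1) + 1) * (t * v * a n i) ^ 2 := by
            refine Finset.sum_le_sum fun i _ => H _ ?_
            have h3 := h1 i
            rw [le_div_iff₀ (by positivity)] at h3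
            rw [abs_mul, abs_mul, abs_of_pos hvp]
            nlinarith [abs_nonneg (a n i)]
        _ = ε / (t ^ 2 * (|σ2| + 1) + 1) * (t ^ 2 * (((K:ℝ) - 1) / K ^ 2 * ∑ i, a n i ^ 2)) := by
            rw [← hvv, Finset.mul_sum, Finset.mul_sum, Finset.mul_sum]
            refine Finset.sum_congr rfl fun i _ => by ring
        _ ≤ ε / (t ^ 2 * (|σ2| + 1) + 1) * (t ^ 2 * (|σ2| + 1)) := by gcongr
        _ < ε := by
            rw [div_mul_eq_mul_div, div_lt_iff₀ hden]
            nlinarith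
    intro ε hε
    obtain ⟨N, hN⟩ := eventually_atTop.1 (key ε hε)
    exact ⟨N, fun n hn => by rw [dist_zero_right]; exact hN n hn.le⟩
  simp_rw [e1]
  simp_rw [e2] at lim2
  simpa using lim1.add lim2

lemma transfer (Y Yt : ∀ n : ℕ, Fin n → ℝ) (M c L : ℝ)
    (h3 : ∀ n, ∑ i, Y n i ^ 2 ≤ n * M)
    (hD : Tendsto (fun n => (∑ i, (Yt n i - Y n i) ^ 2) / (n:ℝ)) atTop (𝓝 0))
    (h1 : ∀ ε > (0 : ℝ), ∀ᶠ nn in atTop, ∀ i : Fin nn, Yt nn i ^ 2 / nn < ε)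
    (h2 : Tendsto (fun n => c / n * ∑ i, Yt n i ^ 2) atTop (𝓝 L)) :
    (∀ ε > (0 : ℝ), ∀ᶠ nn in atTop, ∀ i : Fin nn, Y nn i ^ 2 / nn < ε) ∧
    Tendsto (fun n => c / n * ∑ i, Y n i ^ 2) atTop (𝓝 L) := by
  constructor
  · intro ε hε
    filter_upwards [h1 (ε / 4) (by positivity), hD.eventually_lt_const (show 0 < ε / 4 by positivity)]
      with n a1 a2 i
    have hn : (0:ℝ) < n := by exact_mod_cast i.pos
    have a3 := a1 i
    have a4 : (Yt n i - Y n i) ^ 2 ≤ ∑ i, (Yt n i - Y n i) ^ 2 :=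
      Finset.single_le_sum (f := fun i => (Yt n i - Y n i) ^ 2) (fun _ _ => sq_nonneg _) (Finset.mem_univ i)
    rw [div_lt_iff₀ hn] at a2 a3 ⊢
    nlinarith [sq_nonneg (2 * Yt n i - Y n i)]
  · have hc : Tendsto (fun n : ℕ => (∑ i, Y n i * (Yt n i - Y n i)) / (n:ℝ)) atTop (𝓝 0) := by
      have hs : Tendsto (fun n : ℕ => √(M * ((∑ i, (Yt n i - Y n i) ^ 2) / (n:ℝ)))) atTop (𝓝 0) := by
        have := (hD.const_mul M).sqrt
        simpa using this
      refine squeeze_zero_norm (fun n => ?_) hs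
      rw [Real.norm_eq_abs]
      refine Real.abs_le_sqrt ?_
      rcases Nat.eq_zero_or_pos n with h0 | h0
      · subst h0; simp
      have hn : (0:ℝ) < n := by exact_mod_cast h0
      have cs := Finset.sum_mul_sq_le_sq_mul_sq Finset.univ (Y n) (fun i => Yt n i - Y n i)
      have hp : 0 ≤ ∑ i, (Yt n i - Y n i) ^ 2 := Finset.sum_nonneg fun _ _ => sq_nonneg _
      rw [div_pow, ← mul_div_assoc, div_le_div_iff₀ (by positivity) hn]
      have := mul_le_mul_of_nonneg_right (h3 n) hp
      nlinarith
    have h4 := (h2.sub ((hc.const_mul (2 * c)).add (hD.const_mul c)))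
    simp only [mul_zero, add_zero, sub_zero] at h4
    refine h4.congr fun n => ?_
    have : ∑ i, Yt n i ^ 2 = ∑ i, Y n i ^ 2 + 2 * ∑ i, Y n i * (Yt n i - Y n i)
        + ∑ i, (Yt n i - Y n i) ^ 2 := by
      rw [Finset.mul_sum, ← Finset.sum_add_distrib, ← Finset.sum_add_distrib]
      refine Finset.sum_congr rfl fun i _ => by ring
    rw [this]; ring

lemma exp_diff (x y : ℝ) : ‖Complex.exp (x * Complex.I) - Complex.exp (y * Complex.I)‖ ≤ |x - y| := by
  have e : Complex.exp (x * Complex.I) - Complex.exp (y * Complex.I) =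
      Complex.exp (y * Complex.I) * (Complex.exp (Complex.I * (x - y : ℝ)) - 1) := by
    rw [mul_sub, ← Complex.exp_add]; push_cast; ring_nf
  rw [e, norm_mul, Complex.norm_exp_ofReal_mul_I, one_mul]
  exact Real.norm_exp_I_mul_ofReal_sub_one_le

/-- events -/
lemma good_event {K : ℕ} (hK : 2 ≤ K) (k : Fin K)
    (q : ℕ → ℝ) (hq : ∀ m : ℕ, 0 < m → m < K → stdGaussianCDF (q m) = (m : ℝ) / K)
    (d : ℕ → ℕ) (X : ∀ nn : ℕ, Matrix (Fin nn) (Fin (d nn)) ℝ)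
    (hX : ∀ nn (i : Fin nn), ∑ j, X nn i j ^ 2 = 1)
    (η : ℕ → ℝ) (hη : ∀ nn, 0 < η nn)
    (hηop : Tendsto (fun nn => η nn * opNorm (X nn * (X nn)ᵀ - 1)) atTop (𝓝 0))
    (δ : ℝ) (hδ : 0 < δ) : ∀ᶠ n in atTop, ∃ B : Matrix (Fin n) (Fin n) ℝ,
      pgd (X n) (η n) (deriv (fkfun q K k) 0) = B * Bᵀ ∧
      (∀ a b : Fin n → ℝ, |∑ i, ∑ j, a i * fkfun q K k ((B * Bᵀ) i j) * b j -
          ((K:ℝ) - 1) / K ^ 2 * ∑ i, a i * b i| ≤ δ * (∑ i, a i ^ 2 + ∑ i, b i ^ 2)) ∧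
      ∀ a : Fin n → ℝ,
        ∫ z, (Sf q K k a B z - Sf q K k a 1 z) ^ 2 ∂(gamN n) ≤ 8 * δ * ∑ i, a i ^ 2 := by
  obtain ⟨ε, hε, H⟩ := coupling hK k q hq δ hδ
  set c := deriv (fkfun q K k) 0
  have ht : Tendsto (fun n => |η n * c| * opNorm (X n * (X n)ᵀ - 1)) atTop (𝓝 0) := by
    have := hηop.const_mul |c|
    rw [mul_zero] at this
    refine this.congr fun n => ?_
    rw [abs_mul, abs_of_pos (hη n)]; ring
  have hm : 0 < min (ε / 8) (1 / 2) := by positivity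
  filter_upwards [ht.eventually_lt_const hm] with n hn
  obtain ⟨B, b1, b2, b3, b4, b5⟩ := pgd_rep (X n) (hX n) (η n) c _ rfl
  set e := |η n * c| * opNorm (X n * (X n)ᵀ - 1) with he
  have he0 : 0 ≤ e := mul_nonneg (abs_nonneg _) (norm_nonneg _)
  have he1 : e < ε / 8 := hn.trans_le (min_le_left _ _)
  have he2 : e < 1 / 2 := hn.trans_le (min_le_right _ _)
  refine ⟨B, b1, H n B (b2.mono (by positivity) (by linarith)) (b3.mono (by positivity) (by nlinarith)) b4 b5⟩

lemma charfun_close {K : ℕ} (hK : 2 ≤ K) (k : Fin K)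
    (q : ℕ → ℝ) (hq : ∀ m : ℕ, 0 < m → m < K → stdGaussianCDF (q m) = (m : ℝ) / K) {n : ℕ}
    (a : Fin n → ℝ) (B : Matrix (Fin n) (Fin n) ℝ) (t ε : ℝ) (hε : 0 < ε) :
    ‖∫ z, Complex.exp (t * (Sf q K k a B z : ℝ) * Complex.I) ∂(gamN n) -
      ∫ z, Complex.exp (t * (Sf q K k a 1 z : ℝ) * Complex.I) ∂(gamN n)‖ ≤
    ε / 2 + t ^ 2 / (2 * ε) * ∫ z, (Sf q K k a B z - Sf q K k a 1 z) ^ 2 ∂(gamN n) := by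
  have hI : ∀ U : Matrix (Fin n) (Fin n) ℝ,
      Integrable (fun z => Complex.exp (t * (Sf q K k a U z : ℝ) * Complex.I)) (gamN n) := by
    intro U
    have hm := Sf_meas hK k q hq a U
    refine Integrable.of_bound (C := 1) (by fun_prop) (ae_of_all _ fun z => ?_)
    rw [← Complex.ofReal_mul, Complex.norm_exp_ofReal_mul_I]
  have hI2 : Integrable (fun z => (Sf q K k a B z - Sf q K k a 1 z) ^ 2) (gamN n) := by
    have h1 := ((Sf_int2 hK k q hq a B B).sub ((Sf_int2 hK k q hq a B 1).const_mul 2)).add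
      (Sf_int2 hK k q hq a 1 1)
    refine h1.congr (ae_of_all _ fun z => ?_)
    simp only [Pi.add_apply, Pi.sub_apply]; ring
  rw [← integral_sub (hI B) (hI 1), ← integral_const_mul]
  have e : ε / 2 + ∫ z, t ^ 2 / (2 * ε) * (Sf q K k a B z - Sf q K k a 1 z) ^ 2 ∂(gamN n) =
      ∫ z, (ε / 2 + t ^ 2 / (2 * ε) * (Sf q K k a B z - Sf q K k a 1 z) ^ 2) ∂(gamN n) := by
    rw [integral_add (integrable_const _) (hI2.const_mul _)]; simp
  rw [e]
  refine norm_integral_le_of_norm_le ((integrable_const _).add (hI2.const_mul _)) (ae_of_all _ fun z => ?_)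
  have h := exp_diff (t * Sf q K k a B z) (t * Sf q K k a 1 z)
  push_cast at h
  refine h.trans ?_
  rw [← mul_sub, abs_mul]
  set x := Sf q K k a B z - Sf q K k a 1 z
  have h5 : |t| * |x| = ε / 2 + t ^ 2 / (2 * ε) * x ^ 2 - (ε - |t| * |x|) ^ 2 / (2 * ε) := by
    rw [← sq_abs t, ← sq_abs x]; field_simp; ring
  rw [h5]
  have : 0 ≤ (ε - |t| * |x|) ^ 2 / (2 * ε) := by positivity
  linarith

/-- **Asymptotic normality under one-step PGD-Gauss.**
Under unit-norm covariate rows, `η_n ‖XXᵀ − I‖_op → 0`, `T⁽ⁿ⁾ ~ N(0, Σ_{η_n})` (expressed as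
the pushforward of an i.i.d. standard Gaussian vector by any `A` with `A Aᵀ = Σ_{η_n}`),
`D_i = g(T_i)`, and with `Ỹ(k) = f_k(I)^{−1/2} f_k(Σ_{η_n})^{1/2} Y(k)` (the square root
`Q_n = f_k(Σ_{η_n})^{1/2}` being characterized as the unique positive semidefinite `Q` with
`Q² = f_k(Σ_{η_n})`, and `f_k(I)^{−1/2} = (K/√(K−1)) I`), if
(1) `max_i Ỹ_i(k)²/n → 0`, (2) `((K−1)/n) ‖Ỹ(k)‖² → σ² > 0`, (3) `‖Y⁽ⁿ⁾(k)‖² ≤ nM`,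
then `√n (τ̂_k − τ_k)` converges in distribution to `N(0, σ²)` (weak convergence expressed
via bounded continuous test functions). -/
theorem asymptotic_normality_one_step_pgd
    (K : ℕ) (hK : 2 ≤ K) (k : Fin K)
    (q : ℕ → ℝ) (hq : ∀ m : ℕ, 0 < m → m < K → stdGaussianCDF (q m) = (m : ℝ) / K)
    (Ω : ℕ → Type) [∀ nn, MeasureSpace (Ω nn)]
    [∀ nn, IsProbabilityMeasure (volume : Measure (Ω nn))]
    (d : ℕ → ℕ) (X : ∀ nn : ℕ, Matrix (Fin nn) (Fin (d nn)) ℝ)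
    (hX : ∀ nn (i : Fin nn), ∑ j, X nn i j ^ 2 = 1)
    (Y : ∀ nn : ℕ, Fin nn → ℝ)
    (η : ℕ → ℝ) (hη : ∀ nn, 0 < η nn)
    (hηop : Tendsto (fun nn => η nn * opNorm (X nn * (X nn)ᵀ - 1)) atTop (𝓝 0))
    (A : ∀ nn : ℕ, Matrix (Fin nn) (Fin nn) ℝ)
    (hA : ∀ nn, A nn * (A nn)ᵀ = pgd (X nn) (η nn) (deriv (fkfun q K k) 0))
    (T : ∀ nn : ℕ, Ω nn → Fin nn → ℝ) (hTmeas : ∀ nn, Measurable (T nn))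
    (hTlaw : ∀ nn, Measure.map (T nn) volume =
      Measure.map (fun z => A nn *ᵥ z) (Measure.pi fun _ : Fin nn => gaussianReal 0 1))
    (D : ∀ nn : ℕ, Ω nn → Fin nn → Fin K)
    (hD : ∀ nn ω i (kk : Fin K), D nn ω i = kk ↔ T nn ω i ∈ armSet q K kk)
    (Q : ∀ nn : ℕ, Matrix (Fin nn) (Fin nn) ℝ)
    (hQpsd : ∀ nn, (Q nn).PosSemidef)
    (hQsq : ∀ nn, Q nn * Q nn = Matrix.of fun i j =>
      fkfun q K k (pgd (X nn) (η nn) (deriv (fkfun q K k) 0) i j))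
    (Ytil : ∀ nn : ℕ, Fin nn → ℝ)
    (hYtil : ∀ nn, Ytil nn = ((K : ℝ) / Real.sqrt ((K : ℝ) - 1)) • (Q nn *ᵥ Y nn))
    (σ2 : ℝ≥0) (hσ2 : 0 < σ2)
    (h1 : ∀ ε > (0 : ℝ), ∀ᶠ nn in atTop, ∀ i : Fin nn, Ytil nn i ^ 2 / nn < ε)
    (h2 : Tendsto (fun nn => ((K : ℝ) - 1) / nn * ∑ i, Ytil nn i ^ 2) atTop (𝓝 (σ2 : ℝ)))
    (M : ℝ) (hM : 0 < M) (h3 : ∀ nn, ∑ i, Y nn i ^ 2 ≤ nn * M) :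
    ∀ f : BoundedContinuousFunction ℝ ℝ,
      Tendsto
        (fun nn : ℕ => ∫ ω, f (Real.sqrt (nn : ℝ) *
          ((K : ℝ) / (nn : ℝ) * ∑ i, (if D nn ω i = k then Y nn i else 0) -
            (1 : ℝ) / (nn : ℝ) * ∑ i, Y nn i)))
        atTop (𝓝 (∫ x, f x ∂(gaussianReal 0 σ2))) := by
  have hK2 : (2:ℝ) ≤ K := by exact_mod_cast hK
  have hK1 : (0:ℝ) < (K:ℝ) - 1 := by linarith
  have hK0 : (0:ℝ) < K := by linarith
  have hv0 : 0 < ((K:ℝ) - 1) / K ^ 2 := by positivity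
  obtain ⟨v, hv⟩ : ∃ v, v = √(((K:ℝ) - 1) / K ^ 2) := ⟨_, rfl⟩
  have hvp : 0 < v := by rw [hv]; positivity
  have hvK : (K : ℝ) / Real.sqrt ((K : ℝ) - 1) = v⁻¹ := by
    rw [hv, Real.sqrt_div hK1.le, Real.sqrt_sq hK0.le, inv_div]
  have hgood := good_event hK k q hq d X hX η hη hηop
  -- closeness of the two outcome vectors
  have hDn : Tendsto (fun n => (∑ i, (Ytil n i - Y n i) ^ 2) / (n:ℝ)) atTop (𝓝 0) := by
    refine Metric.tendsto_nhds.2 fun ε hε => ?_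
    have hδ : 0 < min (v / 2) (ε * v ^ 3 / (4 * M)) := by positivity
    filter_upwards [hgood _ hδ, eventually_gt_atTop 0] with n hB hn0
    obtain ⟨B, b1, b2, -⟩ := hB
    have hn : (0:ℝ) < n := by exact_mod_cast hn0
    set δ := min (v / 2) (ε * v ^ 3 / (4 * M)) with hδd
    have d1 : δ ≤ v / 2 := min_le_left _ _
    have d2 : δ ≤ ε * v ^ 3 / (4 * M) := min_le_right _ _
    have hp := psd_sqrt_close (Q n) (hQpsd n) _ δ hv0.le (by
      rw [hQsq n, b1]; exact b2) (Y n)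
    rw [← hv] at hp
    have e1 : ∑ i, ((Q n *ᵥ Y n) i - v * Y n i) ^ 2 = v ^ 2 * ∑ i, (Ytil n i - Y n i) ^ 2 := by
      rw [Finset.mul_sum]
      refine Finset.sum_congr rfl fun i _ => ?_
      rw [hYtil n, hvK, Pi.smul_apply, smul_eq_mul]
      field_simp
    rw [e1] at hp
    have hS : 0 ≤ ∑ i, (Ytil n i - Y n i) ^ 2 := Finset.sum_nonneg fun _ _ => sq_nonneg _
    set S := ∑ i, (Ytil n i - Y n i) ^ 2
    rw [dist_zero_right, Real.norm_eq_abs, abs_of_nonneg (by positivity), div_lt_iff₀ hn]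
    rw [le_div_iff₀ (by positivity)] at d2
    have f1 : v / 2 * (v ^ 2 * S) ≤ δ * (n * M) := by
      calc _ ≤ (v - δ) * (v ^ 2 * S) := by gcongr; linarith
        _ ≤ _ := hp.trans (by gcongr; exact h3 n)
    have f2 : v ^ 3 * (2 * S) ≤ v ^ 3 * (ε * n) := by nlinarith
    have f3 := le_of_mul_le_mul_left f2 (by positivity)
    have : 0 < ε * n := by positivity
    linarith
  obtain ⟨g1, g2⟩ := transfer Y Ytil M ((K:ℝ) - 1) σ2 h3 hDn h1 h2
  -- weights
  obtain ⟨a, ha⟩ : ∃ a : ∀ n : ℕ, Fin n → ℝ, ∀ n i, a n i = K * Y n i / √(n:ℝ) := ⟨_, fun _ _ => rfl⟩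
  have ha2 : ∀ n i, a n i ^ 2 = K ^ 2 * (Y n i ^ 2 / n) := by
    intro n i
    rw [ha, div_pow, mul_pow, Real.sq_sqrt (Nat.cast_nonneg _)]; ring
  have hmax : ∀ ε > (0:ℝ), ∀ᶠ n in atTop, ∀ i, |a n i| ≤ ε := by
    intro ε hε
    filter_upwards [g1 (ε ^ 2 / K ^ 2) (by positivity)] with n hn i
    refine abs_le_of_sq_le_sq ?_ hε.le
    have := hn i
    rw [lt_div_iff₀ (by positivity)] at this
    rw [ha2]; linarith
  have hsum : Tendsto (fun n => ((K:ℝ) - 1) / K ^ 2 * ∑ i, a n i ^ 2) atTop (𝓝 (σ2:ℝ)) := by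
    refine g2.congr fun n => ?_
    simp_rw [ha2]
    rw [← Finset.mul_sum, ← Finset.sum_div]
    field_simp
  have hclt := clt_iid hK k q hq a hmax σ2 hsum
  -- the statistic
  set G : ∀ n : ℕ, Ω n → ℝ := fun n ω => Real.sqrt (n : ℝ) *
          ((K : ℝ) / (n : ℝ) * ∑ i, (if D n ω i = k then Y n i else 0) -
            (1 : ℝ) / (n : ℝ) * ∑ i, Y n i) with hG
  have hGeq : ∀ n ω, G n ω = ∑ i, a n i * hk q K k (T n ω i) := by
    intro n ω
    have hsq : √(n:ℝ) / n = 1 / √(n:ℝ) := Real.sqrt_div_self'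
    have e0 : G n ω = √(n:ℝ) / n * (K * ∑ i, (if D n ω i = k then Y n i else 0) - ∑ i, Y n i) := by
      simp only [hG]; ring
    rw [e0, hsq, Finset.mul_sum, ← Finset.sum_sub_distrib, Finset.mul_sum]
    refine Finset.sum_congr rfl fun i _ => ?_
    rw [ha]
    unfold hk
    have := hD n ω i k
    by_cases h : D n ω i = k
    · rw [if_pos h, if_pos (this.1 h)]; field_simp
    · rw [if_neg h, if_neg (fun h' => h (this.2 h'))]; field_simp; ring
  have hHm : ∀ n, Measurable fun w : Fin n → ℝ => ∑ i, a n i * hk q K k (w i) := by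
    intro n
    refine Finset.measurable_sum _ fun i _ => ?_
    exact ((hk_meas hK k q hq).comp (measurable_pi_apply i)).const_mul _
  have hGm : ∀ n, Measurable (G n) := by
    intro n
    rw [funext (hGeq n)]
    exact (hHm n).comp (hTmeas n)
  have hlaw : ∀ n (B : Matrix (Fin n) (Fin n) ℝ), pgd (X n) (η n) (deriv (fkfun q K k) 0) = B * Bᵀ →
      Measure.map (G n) volume = Measure.map (Sf q K k (a n) B) (gamN n) := by
    intro n B hB
    have hmv : Measurable fun z : Fin n → ℝ => B *ᵥ z := by
      refine measurable_pi_lambda _ fun i => ?_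
      simp only [Matrix.mulVec, dotProduct]; fun_prop
    rw [funext (hGeq n)]
    have e1 := Measure.map_map (μ := volume) (hHm n) (hTmeas n)
    have e2 := Measure.map_map (μ := gamN n) (hHm n) hmv
    have e3 : Measure.map (T n) volume = Measure.map (fun z => B *ᵥ z) (gamN n) :=
      (hTlaw n).trans (map_mulVec_eq (A n) B ((hA n).trans hB))
    rw [e3] at e1
    exact e1.symm.trans e2
  have hchar : ∀ t : ℝ, Tendsto (fun n => charFun (Measure.map (G n) volume) t) atTop
      (𝓝 (charFun (gaussianReal 0 σ2) t)) := by
    intro t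
    have hlim : charFun (gaussianReal 0 σ2) t = Complex.exp (-((σ2:ℝ) * t ^ 2 / 2 : ℝ)) := by
      rw [charFun_gaussianReal]; congr 1; push_cast; ring
    rw [hlim]
    have hz : Tendsto (fun n => charFun (Measure.map (G n) volume) t -
        ∫ z, Complex.exp (t * (Sf q K k (a n) 1 z : ℝ) * Complex.I) ∂(gamN n)) atTop (𝓝 0) := by
      refine Metric.tendsto_nhds.2 fun ε hε => ?_
      have hL : 0 < ((σ2:ℝ) + 1) / (((K:ℝ) - 1) / K ^ 2) := by positivity
      set L := ((σ2:ℝ) + 1) / (((K:ℝ) - 1) / K ^ 2) with hLd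
      have hδ : 0 < ε ^ 2 / (16 * t ^ 2 * L + 1) := by positivity
      filter_upwards [hgood _ hδ, hsum.eventually_lt_const (lt_add_one (σ2:ℝ))] with n hB hs
      obtain ⟨B, b1, -, b2⟩ := hB
      have hsL : ∑ i, a n i ^ 2 ≤ L := by
        rw [hLd, le_div_iff₀ hv0]; linarith
      rw [dist_zero_right, hlaw n B b1, charFun_apply_real,
        integral_map (Sf_meas hK k q hq (a n) B).aemeasurable (by fun_prop)]
      refine (charfun_close hK k q hq (a n) B t ε hε).trans_lt ?_
      have b3 := b2 (a n)
      have b4 : ∫ z, (Sf q K k (a n) B z - Sf q K k (a n) 1 z) ^ 2 ∂(gamN n) ≤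
          8 * (ε ^ 2 / (16 * t ^ 2 * L + 1)) * L := b3.trans (by gcongr)
      have b5 : t ^ 2 / (2 * ε) * ∫ z, (Sf q K k (a n) B z - Sf q K k (a n) 1 z) ^ 2 ∂(gamN n) ≤
          t ^ 2 / (2 * ε) * (8 * (ε ^ 2 / (16 * t ^ 2 * L + 1)) * L) := by gcongr
      have b6 : t ^ 2 / (2 * ε) * (8 * (ε ^ 2 / (16 * t ^ 2 * L + 1)) * L) < ε / 2 := by
        have : t ^ 2 / (2 * ε) * (8 * (ε ^ 2 / (16 * t ^ 2 * L + 1)) * L) =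
          (4 * t ^ 2 * L * ε) / (16 * t ^ 2 * L + 1) := by field_simp; ring
        rw [this, div_lt_iff₀ (by positivity)]
        have : 0 ≤ t ^ 2 * L * ε := by positivity
        nlinarith
      linarith
    simpa using hz.add (hclt t)
  intro f
  have hpm : ∀ n, IsProbabilityMeasure (Measure.map (G n) volume) := fun n =>
    Measure.isProbabilityMeasure_map (hGm n).aemeasurable
  have hconv := (ProbabilityMeasure.tendsto_iff_tendsto_charFun
    (μ := fun n => (⟨Measure.map (G n) volume, hpm n⟩ : ProbabilityMeasure ℝ))
    (μ₀ := ⟨gaussianReal 0 σ2, inferInstance⟩)).2 hchar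
  have hfin := (ProbabilityMeasure.tendsto_iff_forall_integral_tendsto.1 hconv) f
  refine hfin.congr fun n => ?_
  exact integral_map (hGm n).aemeasurable f.continuous.aestronglyMeasurable

end
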